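/- arXiv:1607.07171 — 7 statements merged into one kernel-verified Lean document; each statement's English description precedes it below -/
import Mathlib

section
/- Let q = qᴿ + qᴵ·i be a Gaussian prime with qᴿ > qᴵ ≥ 1. Then every valid symbol w satisfies 2·N(w) ≤ N(q) − 2·qᴿ + 1, and the Gaussian integer w* = (qᴿ − qᴵ − 1)/2 + ((qᴿ + qᴵ − 1)/2)·i (whose coordinates are integers since qᴿ + qᴵ is odd) is a valid symbol attaining equality. -/
open GaussianInt

/-- A Gaussian integer `w` is a valid symbol (representative element of `ℤ[i]/q`) if both of
its coordinates in the rotated basis `(q/|q|, i·q/|q|)` have absolute value less than `|q|/2`,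
i.e. `2·|Re(w·q̄)| < N(q)` and `2·|Im(w·q̄)| < N(q)`. -/
def IsValidSymbol (q w : GaussianInt) : Prop :=
  2 * |(w * star q).re| < q.norm ∧ 2 * |(w * star q).im| < q.norm

/-!
The bound reads `2 N(w) ≤ N(q - 1)`. The valid symbols `w = x + yi` lie in the interior of `q` times
the square with vertices `(±1 ± i)/2`, where the linear functional `w ↦ Re(pw)` is smaller than
`(|Re(pq)| + |Im(pq)|)/2`. For `p = 1, i, 1 ± i` and `|qᴵ| ≤ qᴿ` this encloses the symbols in the
octagon `|x|, |y| < (qᴿ + |qᴵ|)/2`, `|x| + |y| < qᴿ`. By integrality the inequalities improve to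
`|x|, |y| ≤ (qᴿ + |qᴵ| - 1)/2` and `|x| + |y| ≤ qᴿ - 1`, and on this smaller octagon `x² + y²` is
largest at the vertices, where it equals `N(q - 1)/2`. One of these vertices is
`(1 + i)(q - 1)/2`, which is a Gaussian integer exactly when `qᴿ + qᴵ` is odd.
-/

theorem two_mul_sq_add_sq_le {R : Type*} [CommRing R] [LinearOrder R] [IsStrictOrderedRing R]
    {x y s d : R} (hadd : |x| + |y| ≤ s) (hx : 2 * |x| ≤ s + d) (hy : 2 * |y| ≤ s + d) :
    2 * (x ^ 2 + y ^ 2) ≤ s ^ 2 + d ^ 2 := by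
  wlog hxy : |x| ≤ |y| generalizing x y
  · rw [add_comm (x ^ 2)]
    exact this (by rwa [add_comm]) hy hx (le_of_not_ge hxy)
  rw [← sq_abs x, ← sq_abs y]
  have hs : 0 ≤ |x| * (s - |x| - |y|) := mul_nonneg (abs_nonneg x) (by linarith)
  have hd : 0 ≤ (|y| - |x|) * (s + d - 2 * |y|) :=
    mul_nonneg (sub_nonneg.2 hxy) (sub_nonneg.2 hy)
  linear_combination 4 * hs + 2 * hd + sq_nonneg (s - |x| - |y|) + sq_nonneg (d + |x| - |y|)

theorem gaussianInt_norm_eq (z : GaussianInt) : z.norm = z.re ^ 2 + z.im ^ 2 := by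
  rw [Zsqrtd.norm_def]
  ring

theorem gaussianInt_norm_sub_one (z : GaussianInt) : (z - 1).norm = z.norm - 2 * z.re + 1 := by
  simp only [gaussianInt_norm_eq, Zsqrtd.re_sub, Zsqrtd.im_sub, Zsqrtd.re_one, Zsqrtd.im_one]
  ring

theorem gaussianInt_norm_one_add_I : (⟨1, 1⟩ : GaussianInt).norm = 2 := by
  decide

theorem abs_re_add_abs_im_pos {z : GaussianInt} (hz : z ≠ 0) : 0 < |z.re| + |z.im| := by
  contrapose! hz
  ext
  · exact abs_nonpos_iff.1 (by linarith [abs_nonneg z.im])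
  · exact abs_nonpos_iff.1 (by linarith [abs_nonneg z.re])

theorem two_mul_eq_one_add_I_mul_iff {w z : GaussianInt} :
    2 * w = ⟨1, 1⟩ * z ↔ 2 * w.re = z.re - z.im ∧ 2 * w.im = z.re + z.im := by
  rw [Zsqrtd.ext_iff]
  simp [sub_eq_add_neg, add_comm]

theorem exists_two_mul_eq_one_add_I_mul_sub_one {q : GaussianInt} (hodd : Odd (q.re + q.im)) :
    ∃ w : GaussianInt, 2 * w = ⟨1, 1⟩ * (q - 1) := by
  obtain ⟨k, hk⟩ := hodd
  refine ⟨⟨k - q.im, k⟩, two_mul_eq_one_add_I_mul_iff.2 ⟨?_, ?_⟩⟩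
  · simp only [Zsqrtd.re_sub, Zsqrtd.im_sub, Zsqrtd.re_one, Zsqrtd.im_one]
    linarith
  · simp only [Zsqrtd.re_sub, Zsqrtd.im_sub, Zsqrtd.re_one, Zsqrtd.im_one]
    linarith

theorem odd_re_add_im_of_irreducible {q : GaussianInt} (hq : Irreducible q) (hnorm : q.norm ≠ 2) :
    Odd (q.re + q.im) := by
  by_contra heven
  obtain ⟨k, hk⟩ := Int.not_odd_iff_even.1 heven
  have hdvd : (⟨1, 1⟩ : GaussianInt) ∣ q := by
    refine ⟨⟨k, q.im - k⟩, ?_⟩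
    ext
    · simp only [Zsqrtd.re_mul]
      linarith
    · simp
  rcases hq.dvd_iff.1 hdvd with hunit | hassoc
  · have hone := (Zsqrtd.norm_eq_one_iff' (by norm_num) _).2 hunit
    rw [gaussianInt_norm_one_add_I] at hone
    norm_num at hone
  · rw [Zsqrtd.norm_eq_of_associated (by norm_num) hassoc] at hnorm
    exact hnorm gaussianInt_norm_one_add_I

namespace IsValidSymbol

variable {q w : GaussianInt}

theorem norm_pos (hw : IsValidSymbol q w) : 0 < q.norm := by
  linarith [hw.1, abs_nonneg (w * star q).re]

theorem two_mul_abs_re_mul_lt (hw : IsValidSymbol q w) {p : GaussianInt} (hp : p ≠ 0) :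
    2 * |(p * w).re| < |(p * q).re| + |(p * q).im| := by
  set z := w * star q with hz
  have hq : q ≠ 0 := GaussianInt.norm_pos.1 hw.norm_pos
  have hpos : 0 < |(p * q).re| + |(p * q).im| := abs_re_add_abs_im_pos (mul_ne_zero hp hq)
  have hcoord : q.norm * (p * w).re = (p * q).re * z.re - (p * q).im * z.im := by
    have hmul : (q.norm : GaussianInt) * (p * w) = p * q * z := by
      rw [Zsqrtd.norm_eq_mul_conj, hz]
      ring
    have hre := congrArg Zsqrtd.re hmul
    rw [Zsqrtd.re_smul, Zsqrtd.re_mul (p * q)] at hre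
    linarith
  refine lt_of_mul_lt_mul_left ?_ hw.norm_pos.le
  calc q.norm * (2 * |(p * w).re|)
      = 2 * |(p * q).re * z.re - (p * q).im * z.im| := by
        rw [← hcoord, abs_mul, abs_of_pos hw.norm_pos]
        ring
    _ ≤ 2 * (|(p * q).re * z.re| + |(p * q).im * z.im|) := by
        gcongr
        exact abs_sub _ _
    _ = |(p * q).re| * (2 * |z.re|) + |(p * q).im| * (2 * |z.im|) := by
        rw [abs_mul, abs_mul]
        ring
    _ ≤ |(p * q).re| * (q.norm - 1) + |(p * q).im| * (q.norm - 1) := by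
        gcongr
        · exact Int.le_sub_one_of_lt hw.1
        · exact Int.le_sub_one_of_lt hw.2
    _ < q.norm * (|(p * q).re| + |(p * q).im|) := by linarith

theorem two_mul_abs_re_lt (hw : IsValidSymbol q w) : 2 * |w.re| < |q.re| + |q.im| := by
  simpa using hw.two_mul_abs_re_mul_lt one_ne_zero

theorem two_mul_abs_im_lt (hw : IsValidSymbol q w) : 2 * |w.im| < |q.re| + |q.im| := by
  simpa [add_comm] using hw.two_mul_abs_re_mul_lt (p := ⟨0, 1⟩) (by decide)

theorem abs_re_add_abs_im_lt (hw : IsValidSymbol q w) : |w.re| + |w.im| < max |q.re| |q.im| := by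
  have hsub := hw.two_mul_abs_re_mul_lt (p := ⟨1, 1⟩) (by decide)
  have hadd := hw.two_mul_abs_re_mul_lt (p := ⟨1, -1⟩) (by decide)
  have hw_max : |w.re| + |w.im| = max |w.re - w.im| |w.re + w.im| := by grind
  have hq_max : |q.re - q.im| + |q.re + q.im| = 2 * max |q.re| |q.im| := by grind
  simp only [Zsqrtd.re_mul, Zsqrtd.im_mul] at hsub hadd
  rw [hw_max, max_lt_iff]
  constructor <;> grind

theorem two_mul_norm_le (hw : IsValidSymbol q w) (hq : |q.im| ≤ q.re) :
    2 * w.norm ≤ (q - 1).norm := by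
  have hre : |q.re| = q.re := abs_of_nonneg ((abs_nonneg _).trans hq)
  have hadd : |w.re| + |w.im| < q.re := by
    simpa [hre, hq] using hw.abs_re_add_abs_im_lt
  have hbound := two_mul_sq_add_sq_le (s := q.re - 1) (d := |q.im|)
    (Int.le_sub_one_of_lt hadd) (by linarith [hw.two_mul_abs_re_lt])
    (by linarith [hw.two_mul_abs_im_lt])
  simpa [gaussianInt_norm_eq] using hbound

theorem of_two_mul_eq (hq : |q.im| < q.re) (hw : 2 * w = ⟨1, 1⟩ * (q - 1)) :
    IsValidSymbol q w := by
  have hmul : 2 * (w * star q) = ⟨1, 1⟩ * (q.norm - star q) := by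
    rw [Zsqrtd.norm_eq_mul_conj]
    linear_combination star q * hw
  obtain ⟨hre, him⟩ := two_mul_eq_one_add_I_mul_iff.1 hmul
  simp only [Zsqrtd.re_sub, Zsqrtd.im_sub, Zsqrtd.re_intCast, Zsqrtd.im_intCast, Zsqrtd.re_star,
    Zsqrtd.im_star] at hre him
  have hle : q.re + |q.im| ≤ q.norm := by
    rw [gaussianInt_norm_eq, ← sq_abs q.im]
    exact add_le_add (Int.le_self_sq _) (Int.le_self_sq _)
  constructor <;> grind

end IsValidSymbol

theorem two_mul_norm_eq_of_two_mul_eq {q w : GaussianInt} (hw : 2 * w = ⟨1, 1⟩ * (q - 1)) :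
    2 * w.norm = (q - 1).norm := by
  have hnorm : (2 * w).norm = ((⟨1, 1⟩ : GaussianInt) * (q - 1)).norm := by rw [hw]
  have htwo : (2 : GaussianInt).norm = 4 := by decide
  rw [Zsqrtd.norm_mul, Zsqrtd.norm_mul, htwo, gaussianInt_norm_one_add_I] at hnorm
  linarith

theorem stmt2_general (q : GaussianInt) (hodd : Odd (q.re + q.im)) (hq : |q.im| < q.re) :
    (∀ w : GaussianInt, IsValidSymbol q w → 2 * w.norm ≤ q.norm - 2 * q.re + 1) ∧
    (∃ wstar : GaussianInt,
      2 * wstar.re = q.re - q.im - 1 ∧ 2 * wstar.im = q.re + q.im - 1 ∧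
      IsValidSymbol q wstar ∧ 2 * wstar.norm = q.norm - 2 * q.re + 1) := by
  rw [← gaussianInt_norm_sub_one]
  refine ⟨fun w hw => hw.two_mul_norm_le hq.le, ?_⟩
  obtain ⟨w, hw⟩ := exists_two_mul_eq_one_add_I_mul_sub_one hodd
  obtain ⟨hre, him⟩ := two_mul_eq_one_add_I_mul_iff.1 hw
  exact ⟨w, by simpa [sub_right_comm] using hre, by simpa [sub_add_eq_add_sub] using him,
    .of_two_mul_eq hq hw, two_mul_norm_eq_of_two_mul_eq hw⟩

/-- Let `q = qᴿ + qᴵ·i` be a Gaussian prime with `qᴿ > qᴵ ≥ 1`. Then every valid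
symbol `w` satisfies `2·N(w) ≤ N(q) − 2·qᴿ + 1`, and the Gaussian integer
`w* = (qᴿ − qᴵ − 1)/2 + ((qᴿ + qᴵ − 1)/2)·i` (whose coordinates are integers since `qᴿ + qᴵ`
is odd) is a valid symbol attaining equality. -/
theorem stmt2 (q : GaussianInt) (hq : Prime q) (h1 : 1 ≤ q.im) (h2 : q.im < q.re) :
    (∀ w : GaussianInt, IsValidSymbol q w → 2 * w.norm ≤ q.norm - 2 * q.re + 1) ∧
    (∃ wstar : GaussianInt,
      2 * wstar.re = q.re - q.im - 1 ∧ 2 * wstar.im = q.re + q.im - 1 ∧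
      IsValidSymbol q wstar ∧ 2 * wstar.norm = q.norm - 2 * q.re + 1) := by
  have hodd : Odd (q.re + q.im) :=
    odd_re_add_im_of_irreducible hq.irreducible (by rw [gaussianInt_norm_eq]; nlinarith)
  exact stmt2_general q hodd (by rwa [abs_of_pos (by linarith)])
end

section
/- Let q be a Gaussian prime with N(q) ≥ 5. Every Gaussian integer δ with N(δ) < N(q) is a valid difference, i.e., δ = w − w′ for some valid symbols w, w′. In particular, every pair (δ_A, δ_B) ≠ (0, 0) with N(δ_A) < N(q) and N(δ_B) < N(q) is a distance-valid difference pair. -/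
open GaussianInt

/-- A Gaussian integer `δ` is a valid difference if `δ = w − w′` for valid symbols `w, w′`. -/
def IsValidDiff (q δ : GaussianInt) : Prop :=
  ∃ w w' : GaussianInt, IsValidSymbol q w ∧ IsValidSymbol q w' ∧ δ = w - w'

/-- `(δA, δB)` is a distance-valid difference pair if both components are valid differences
and `(δA, δB) ≠ (0, 0)`. -/
def IsDistanceValidPair (q δA δB : GaussianInt) : Prop :=
  IsValidDiff q δA ∧ IsValidDiff q δB ∧ (δA, δB) ≠ (0, 0)

/- A difference `δ = w - w'` is determined by the sum `e = w + w'`, which ranges over the class of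
`δ` modulo `2`. In the coordinates `z ↦ z q̄` write `(a, b)` for `δ` and `p = N(q)`; for odd `p`,
`δ` is a valid difference as soon as some `e ≡ δ` lies in the box `|Re e| ≤ p - |a|`,
`|Im e| ≤ p - |b|`.

Even `δ` admit `e = 0`. Otherwise norms modulo `4` give `N(δ) ≤ p - 3`, and we may assume
`|b| ≤ |a|`. If no `e` of norm at most `2` works, the width `m = p - |a|` satisfies `m² ≤ p`, whence
`2|b| ≤ p`. Let `g` be the gcd of the coordinates of `q`. The class of `δ` meets every column
`Re = x` with `x ≡ a (mod 2g)` in an arithmetic progression of step `2p / g`. If `g ≥ 2`, a column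
near the origin already contains a point of the box. If `g = 1` and the box contains no point, then
translating by `iq` shows that the class of `δ + iq` meets each column `Re = 1 - m + 2k`,
`0 ≤ k < m`, at height less than `|b|`. Going from one column to the next adds the height of a fixed
even vector `s` with `Re s = 2`, whose norm is at least `4`, so the total climb `(m - 1) |Im s|`
exceeds `2|b|`: a contradiction. -/

section Coordinates

variable (q w : GaussianInt)

theorem mul_star_re : (w * star q).re = w.re * q.re + w.im * q.im := by
  simp

theorem mul_star_im : (w * star q).im = w.im * q.re - w.re * q.im := by
  simp only [Zsqrtd.im_mul, Zsqrtd.re_star, Zsqrtd.im_star]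
  ring

theorem norm_eq_sq_add_sq : w.norm = w.re ^ 2 + w.im ^ 2 := by
  rw [Zsqrtd.norm_def]
  ring

theorem mul_star_re_sq_add_im_sq :
    (w * star q).re ^ 2 + (w * star q).im ^ 2 = w.norm * q.norm := by
  rw [← norm_eq_sq_add_sq, Zsqrtd.norm_mul, Zsqrtd.norm_conj]

theorem two_dvd_iff_re_im : 2 ∣ w ↔ 2 ∣ w.re ∧ 2 ∣ w.im := by
  exact_mod_cast Zsqrtd.intCast_dvd 2 w

theorem sqrtd_mul_mul_star_re : (Zsqrtd.sqrtd * w * star q).re = -(w * star q).im := by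
  rw [mul_assoc]
  simp

theorem sqrtd_mul_mul_star_im : (Zsqrtd.sqrtd * w * star q).im = (w * star q).re := by
  rw [mul_assoc]
  simp

theorem sqrtd_mul_self_mul_star : Zsqrtd.sqrtd * q * star q = ⟨0, q.norm⟩ := by
  rw [mul_assoc, ← Zsqrtd.norm_eq_mul_conj]
  ext <;> simp

variable {q w}

theorem abs_mul_star_re_lt (h : w.norm < q.norm) : |(w * star q).re| < q.norm := by
  have := mul_star_re_sq_add_im_sq q w
  have := w.norm_nonneg
  apply abs_lt_of_sq_lt_sq _ q.norm_nonneg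
  nlinarith [sq_nonneg (w * star q).im]

theorem abs_mul_star_im_lt (h : w.norm < q.norm) : |(w * star q).im| < q.norm := by
  have := mul_star_re_sq_add_im_sq q w
  have := w.norm_nonneg
  apply abs_lt_of_sq_lt_sq _ q.norm_nonneg
  nlinarith [sq_nonneg (w * star q).re]

end Coordinates

section OddNorm

variable {q δ : GaussianInt}

theorem norm_emod_four_of_odd (hq : Odd q.norm) : q.norm % 4 = 1 := by
  rw [norm_eq_sq_add_sq] at hq ⊢
  rcases Int.even_or_odd' q.re with ⟨r, hr | hr⟩ <;>
    rcases Int.even_or_odd' q.im with ⟨s, hs | hs⟩ <;>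
    rw [hr, hs] at hq ⊢ <;> ring_nf at hq ⊢ <;> grind

theorem norm_emod_four_of_not_two_dvd (hδ : ¬ 2 ∣ δ) : δ.norm % 4 = 1 ∨ δ.norm % 4 = 2 := by
  rw [two_dvd_iff_re_im] at hδ
  rw [norm_eq_sq_add_sq]
  rcases Int.even_or_odd' δ.re with ⟨r, hr | hr⟩ <;>
    rcases Int.even_or_odd' δ.im with ⟨s, hs | hs⟩ <;>
    rw [hr, hs] at hδ ⊢ <;> ring_nf at hδ ⊢ <;> grind

theorem norm_add_three_le (hq : Odd q.norm) (hδ : ¬ 2 ∣ δ) (hlt : δ.norm < q.norm) :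
    δ.norm + 3 ≤ q.norm := by
  have := norm_emod_four_of_odd hq
  have := norm_emod_four_of_not_two_dvd hδ
  omega

theorem odd_norm_of_prime (hq : Prime q) (h : q.norm ≠ 2) : Odd q.norm := by
  by_contra heven
  have hsum : Even (q.re + q.im) := by
    rw [norm_eq_sq_add_sq] at heven
    simpa [Int.even_add, Int.even_pow] using heven
  obtain ⟨s, hs⟩ := hsum.two_dvd
  obtain ⟨t, ht⟩ : ∃ t : GaussianInt, q = ⟨1, 1⟩ * t :=
    ⟨⟨s, q.im - s⟩, Zsqrtd.ext (by simp; omega) (by simp)⟩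
  have hnorm : q.norm = 2 * t.norm := by
    rw [ht, Zsqrtd.norm_mul]
    rfl
  rcases hq.irreducible.isUnit_or_isUnit ht with hu | hu
  · exact absurd ((Zsqrtd.norm_eq_one_iff' (by norm_num) _).2 hu) (by decide)
  · rw [(Zsqrtd.norm_eq_one_iff' (by norm_num) t).2 hu] at hnorm
    exact h hnorm

end OddNorm

section Criterion

variable {q w e δ : GaussianInt}

theorem IsValidSymbol.sqrtd_mul (h : IsValidSymbol q w) : IsValidSymbol q (Zsqrtd.sqrtd * w) := by
  rw [IsValidSymbol, sqrtd_mul_mul_star_re, sqrtd_mul_mul_star_im, abs_neg]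
  exact ⟨h.2, h.1⟩

theorem IsValidDiff.of_sqrtd_mul (h : IsValidDiff q (Zsqrtd.sqrtd * δ)) : IsValidDiff q δ := by
  obtain ⟨w, w', hw, hw', hδ⟩ := h
  refine ⟨_, _, hw'.sqrtd_mul, hw.sqrtd_mul, ?_⟩
  rw [← mul_sub, ← neg_sub w, ← hδ]
  ext <;> simp

theorem two_mul_abs_lt_of_abs_add_abs_le {t y n : ℤ} (hn : Odd n) (h : |y + 2 * t| + |y| ≤ n) :
    2 * |y + t| < n ∧ 2 * |t| < n := by
  obtain ⟨k, rfl⟩ := hn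
  grind

/- The witnesses are `w = (e + δ) / 2` and `w' = (e - δ) / 2`; the parity of `N(q)` turns the weak
inequalities into strict ones. -/
theorem IsValidDiff.of_two_dvd_sub (hq : Odd q.norm) (he : 2 ∣ e - δ)
    (hre : |(e * star q).re| + |(δ * star q).re| ≤ q.norm)
    (him : |(e * star q).im| + |(δ * star q).im| ≤ q.norm) : IsValidDiff q δ := by
  obtain ⟨w, hw⟩ := he
  have hmul : e * star q = δ * star q + (2 : ℤ) * (w * star q) := by
    push_cast
    linear_combination star q * hw
  rw [hmul, Zsqrtd.re_add, Zsqrtd.re_smul] at hre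
  rw [hmul, Zsqrtd.im_add, Zsqrtd.im_smul] at him
  have hre' := two_mul_abs_lt_of_abs_add_abs_le hq hre
  have him' := two_mul_abs_lt_of_abs_add_abs_le hq him
  refine ⟨δ + w, w, ⟨?_, ?_⟩, ⟨hre'.2, him'.2⟩, by ring⟩
  · simpa only [add_mul, Zsqrtd.re_add] using hre'.1
  · simpa only [add_mul, Zsqrtd.im_add] using him'.1

theorem IsValidDiff.of_two_dvd (hq : Odd q.norm) (hδ : 2 ∣ δ) (hlt : δ.norm < q.norm) :
    IsValidDiff q δ := by
  apply IsValidDiff.of_two_dvd_sub (e := 0) hq (by simpa using hδ)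
  · simpa using (abs_mul_star_re_lt hlt).le
  · simpa using (abs_mul_star_im_lt hlt).le

end Criterion

section Bounds

variable {p m a b x y : ℤ}

theorem abs_add_abs_le_of_sq_le_two_mul (hp : 0 ≤ p) (hab : |b| ≤ |a|)
    (h : a ^ 2 + b ^ 2 + 3 * p ≤ p ^ 2) (hy : y ^ 2 ≤ 2 * p) : |y| + |b| ≤ p := by
  rw [← sq_abs a, ← sq_abs b] at h
  rw [← sq_abs y] at hy
  by_contra! hlt
  have hy' : |y| ≤ p + 1 := by nlinarith
  have hb : (p + 1 - |y|) ^ 2 ≤ |b| ^ 2 := by gcongr; omega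
  have ha : |b| ^ 2 ≤ |a| ^ 2 := by gcongr
  have hupper : 2 * (p + 1 - |y|) ^ 2 ≤ p ^ 2 - 3 * p := by linarith
  have hlower : p ^ 2 - 3 * p < 2 * (p + 1 - |y|) ^ 2 :=
    calc p ^ 2 - 3 * p < p ^ 2 - 3 * p + (p - 2 * |y| + 1) ^ 2 + (5 * p + 1 - 2 * |y| ^ 2) := by
          linarith [sq_nonneg (p - 2 * |y| + 1)]
      _ = 2 * (p + 1 - |y|) ^ 2 := by ring
  exact hupper.not_gt hlower

theorem two_mul_abs_le_of_sq_le (hp : 0 ≤ p) (hm : m ^ 2 ≤ p)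
    (h : m ^ 2 + b ^ 2 + 3 * p ≤ 2 * m * p) : 2 * |b| ≤ p := by
  rw [← abs_two, ← abs_mul]
  apply abs_le_of_sq_le_sq _ hp
  obtain ⟨t, rfl⟩ : ∃ t, p = m ^ 2 + t := ⟨p - m ^ 2, by ring⟩
  have ht : 0 ≤ t := by linarith
  calc (2 * b) ^ 2 ≤ 4 * (2 * m * (m ^ 2 + t) - m ^ 2 - 3 * (m ^ 2 + t)) := by linarith
    _ = (m ^ 2 + t) ^ 2 - ((m * (m - 4)) ^ 2 + 2 * t * ((m - 2) ^ 2 + 2) + t ^ 2) := by ring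
    _ ≤ (m ^ 2 + t) ^ 2 := sub_le_self _ (by positivity)

theorem four_mul_sq_lt_of_le_sq_add_four (hm : 0 < m) (hp : 0 ≤ p) (hy : 4 * p ≤ y ^ 2 + 4)
    (h : m ^ 2 + b ^ 2 + 3 * p ≤ 2 * m * p) : (2 * b) ^ 2 < ((m - 1) * y) ^ 2 := by
  have hdefect : 0 < 4 * p * (m - 2) ^ 2 + (8 * m - 4) :=
    add_pos_of_nonneg_of_pos (by positivity) (by linarith)
  calc (2 * b) ^ 2 ≤ 4 * (2 * m * p - m ^ 2 - 3 * p) := by linarith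
    _ = (m - 1) ^ 2 * (4 * p - 4) - (4 * p * (m - 2) ^ 2 + (8 * m - 4)) := by ring
    _ < (m - 1) ^ 2 * (4 * p - 4) := sub_lt_self _ hdefect
    _ ≤ (m - 1) ^ 2 * y ^ 2 := by gcongr; linarith
    _ = ((m - 1) * y) ^ 2 := (mul_pow ..).symm

theorem abs_add_mul_lt_of_forall {n : ℕ} (hy : |y| ≤ p) (hx : |x| ≤ p) (hb : 2 * |b| ≤ p)
    (h : ∀ k ≤ n, |y + k * x| + |b| ≤ 2 * p → |y + k * x| < |b|) :
    ∀ k ≤ n, |y + k * x| < |b| := by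
  intro k
  induction k with
  | zero =>
    intro hk
    apply h 0 hk
    rw [Nat.cast_zero, zero_mul, add_zero]
    linarith [abs_nonneg b]
  | succ k ih =>
    intro hk
    apply h _ hk
    have hprev := ih (by omega)
    have hadd := abs_add_le (y + k * x) x
    rw [Nat.cast_succ, add_mul, one_mul, ← add_assoc]
    linarith

end Bounds

section Width

variable {q δ : GaussianInt}

theorem exists_two_dvd_sub_norm_le_two (q : GaussianInt) (hδ : ¬ 2 ∣ δ) :
    ∃ e : GaussianInt, 2 ∣ e - δ ∧ e.norm ≤ 2 ∧ (e * star q).re ^ 2 ≤ q.norm := by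
  simp only [two_dvd_iff_re_im] at hδ ⊢
  simp only [mul_star_re, norm_eq_sq_add_sq, Zsqrtd.re_sub, Zsqrtd.im_sub]
  by_cases hre : 2 ∣ δ.re
  · exact ⟨⟨0, 1⟩, ⟨by grind, by grind⟩, by norm_num, by simp [sq_nonneg]⟩
  by_cases him : 2 ∣ δ.im
  · exact ⟨⟨1, 0⟩, ⟨by grind, by grind⟩, by norm_num, by simp [sq_nonneg]⟩
  rcases le_total 0 (q.re * q.im) with hsign | hsign
  · exact ⟨⟨1, -1⟩, ⟨by grind, by grind⟩, by norm_num, by grind⟩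
  · exact ⟨⟨1, 1⟩, ⟨by grind, by grind⟩, by norm_num, by grind⟩

theorem mul_star_re_sq_add_im_sq_add_le (hq : Odd q.norm) (hδ : ¬ 2 ∣ δ) (hlt : δ.norm < q.norm) :
    (δ * star q).re ^ 2 + (δ * star q).im ^ 2 + 3 * q.norm ≤ q.norm ^ 2 := by
  rw [mul_star_re_sq_add_im_sq]
  nlinarith [norm_add_three_le hq hδ hlt, q.norm_nonneg]

theorem width_sq_le_of_not_isValidDiff (hq : Odd q.norm) (hlt : δ.norm < q.norm) (hδ : ¬ 2 ∣ δ)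
    (hbad : ¬ IsValidDiff q δ) (hab : |(δ * star q).im| ≤ |(δ * star q).re|) :
    (q.norm - |(δ * star q).re|) ^ 2 ≤ q.norm := by
  obtain ⟨e, he, hnorm, hsq⟩ := exists_two_dvd_sub_norm_le_two q hδ
  have him : |(e * star q).im| + |(δ * star q).im| ≤ q.norm := by
    apply abs_add_abs_le_of_sq_le_two_mul q.norm_nonneg hab
      (mul_star_re_sq_add_im_sq_add_le hq hδ hlt)
    nlinarith [mul_star_re_sq_add_im_sq q e, q.norm_nonneg, sq_nonneg (e * star q).re]
  have hre : q.norm - |(δ * star q).re| < |(e * star q).re| := by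
    by_contra! hle
    exact hbad (.of_two_dvd_sub hq he (by linarith) him)
  have hwidth : 0 < q.norm - |(δ * star q).re| := sub_pos.2 (abs_mul_star_re_lt hlt)
  calc (q.norm - |(δ * star q).re|) ^ 2 ≤ |(e * star q).re| ^ 2 := by gcongr
    _ ≤ q.norm := by rwa [sq_abs]

end Width

section Columns

variable {q δ : GaussianInt}

theorem exists_abs_add_mul_le {k : ℤ} (hk : 0 < k) (y : ℤ) : ∃ j : ℤ, |y + j * (2 * k)| ≤ k := by
  have hmem := sub_toIcoDiv_zsmul_mem_Ico (show 0 < 2 * k by omega) (-k) y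
  rw [smul_eq_mul] at hmem
  refine ⟨-toIcoDiv (show 0 < 2 * k by omega) (-k) y, abs_le.2 ⟨?_, ?_⟩⟩ <;> grind

theorem exists_mul_star_re_eq_gcd (q : GaussianInt) :
    ∃ v : GaussianInt, (v * star q).re = Int.gcd q.re q.im := by
  refine ⟨⟨Int.gcdA q.re q.im, Int.gcdB q.re q.im⟩, ?_⟩
  rw [mul_star_re, Int.gcd_eq_gcd_ab]
  ring

theorem exists_mul_star_re_eq_zero (q : GaussianInt) : ∃ z : GaussianInt,
    (z * star q).re = 0 ∧ Int.gcd q.re q.im * (z * star q).im = q.norm := by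
  obtain ⟨r, hr⟩ := Int.gcd_dvd_left q.re q.im
  obtain ⟨s, hs⟩ := Int.gcd_dvd_right q.re q.im
  refine ⟨⟨-s, r⟩, ?_, ?_⟩
  · rw [mul_star_re]
    linear_combination -s * hr + r * hs
  · rw [mul_star_im, norm_eq_sq_add_sq]
    linear_combination -q.re * hr - q.im * hs

theorem exists_two_dvd_sub_re_eq_gcd_mul_abs_im_le (hq : 0 < q.norm) {x : ℤ}
    (hx : 2 * (Int.gcd q.re q.im : ℤ) ∣ x - (δ * star q).re) :
    ∃ e : GaussianInt, 2 ∣ e - δ ∧ (e * star q).re = x ∧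
      Int.gcd q.re q.im * |(e * star q).im| ≤ q.norm := by
  obtain ⟨t, ht⟩ := hx
  obtain ⟨v, hv⟩ := exists_mul_star_re_eq_gcd q
  obtain ⟨z, hzre, hzim⟩ := exists_mul_star_re_eq_zero q
  have hzpos : 0 < (z * star q).im := pos_of_mul_pos_right (hzim ▸ hq) (by positivity)
  obtain ⟨j, hj⟩ := exists_abs_add_mul_le hzpos ((δ + (2 * t : ℤ) * v) * star q).im
  have hmul : (δ + (2 * t : ℤ) * v + (2 * j : ℤ) * z) * star q =
      (δ + (2 * t : ℤ) * v) * star q + (2 * j : ℤ) * (z * star q) := by ring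
  refine ⟨δ + (2 * t : ℤ) * v + (2 * j : ℤ) * z, ⟨t * v + j * z, by push_cast; ring⟩, ?_, ?_⟩
  · rw [hmul, add_mul, mul_assoc]
    simp only [Zsqrtd.re_add, Zsqrtd.re_smul, hv, hzre]
    linarith
  · rw [hmul, Zsqrtd.im_add, Zsqrtd.im_smul, ← hzim]
    gcongr
    rwa [mul_left_comm, ← mul_assoc] at hj

theorem IsValidDiff.of_not_isCoprime (hq : Odd q.norm) (hcop : ¬ IsCoprime q.re q.im)
    (hlt : δ.norm < q.norm) (him : 2 * |(δ * star q).im| ≤ q.norm) : IsValidDiff q δ := by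
  have hpos : 0 < q.norm := δ.norm_nonneg.trans_lt hlt
  set g : ℤ := (Int.gcd q.re q.im : ℤ) with hg
  obtain ⟨k, hk⟩ : g ∣ q.norm := by
    rw [norm_eq_sq_add_sq]
    exact dvd_add (dvd_pow (Int.gcd_dvd_left ..) two_ne_zero)
      (dvd_pow (Int.gcd_dvd_right ..) two_ne_zero)
  obtain ⟨a, ha⟩ : g ∣ (δ * star q).re := by
    rw [mul_star_re]
    exact dvd_add (Dvd.dvd.mul_left (Int.gcd_dvd_left ..) _)
      (Dvd.dvd.mul_left (Int.gcd_dvd_right ..) _)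
  have hg0 : 0 < g := by
    refine lt_of_le_of_ne (Int.natCast_nonneg _) fun h0 => hpos.ne' ?_
    rw [hk, ← h0, zero_mul]
  have hg2 : 2 ≤ g := by
    rw [Int.isCoprime_iff_gcd_eq_one] at hcop
    omega
  have hak : |a| < k := by
    have := abs_mul_star_re_lt hlt
    rw [ha, hk, abs_mul, abs_of_pos hg0] at this
    exact lt_of_mul_lt_mul_left this hg0.le
  obtain ⟨e, he, hre, him'⟩ := exists_two_dvd_sub_re_eq_gcd_mul_abs_im_le (δ := δ) hpos
    (x := g * (a % 2)) ⟨-(a / 2), by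
      rw [ha, ← hg]
      linear_combination g * Int.emod_add_mul_ediv a 2⟩
  refine .of_two_dvd_sub hq he ?_ ?_
  · rw [hre, ha, hk, abs_mul, abs_mul, abs_of_pos hg0, ← mul_add]
    gcongr
    rw [abs_of_nonneg (by omega)]
    omega
  · have : 2 * |(e * star q).im| ≤ g * |(e * star q).im| := by gcongr
    linarith

end Columns

section Walk

variable {q δ e s : GaussianInt}

theorem abs_im_lt_of_not_isValidDiff (hq : Odd q.norm) (hbad : ¬ IsValidDiff q δ)
    (he : 2 ∣ e - (δ + Zsqrtd.sqrtd * q))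
    (hre : |(e * star q).re| + |(δ * star q).re| ≤ q.norm)
    (him : |(e * star q).im| + |(δ * star q).im| ≤ 2 * q.norm) :
    |(e * star q).im| < |(δ * star q).im| := by
  by_contra! hge
  rcases le_total 0 (e * star q).im with hsign | hsign
  · refine hbad (.of_two_dvd_sub (e := e - Zsqrtd.sqrtd * q) hq ?_ ?_ ?_)
    · rwa [sub_sub, add_comm (Zsqrtd.sqrtd * q)]
    · simpa [sub_mul, sqrtd_mul_self_mul_star, Zsqrtd.re_sub] using hre
    · rw [sub_mul, sqrtd_mul_self_mul_star, Zsqrtd.im_sub]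
      grind
  · refine hbad (.of_two_dvd_sub (e := e + Zsqrtd.sqrtd * q) hq ?_ ?_ ?_)
    · convert he.add (dvd_mul_right 2 (Zsqrtd.sqrtd * q)) using 1
      ring
    · simpa [add_mul, sqrtd_mul_self_mul_star, Zsqrtd.re_add] using hre
    · rw [add_mul, sqrtd_mul_self_mul_star, Zsqrtd.im_add]
      grind

theorem four_mul_norm_le_im_sq_add_four (hs : 2 ∣ s) (hre : (s * star q).re = 2) :
    4 * q.norm ≤ (s * star q).im ^ 2 + 4 := by
  obtain ⟨v, rfl⟩ := hs
  have hv : 0 < v.norm := by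
    refine v.norm_nonneg.lt_of_ne' fun h0 => ?_
    rw [(Zsqrtd.norm_eq_zero_iff (by norm_num) v).1 h0] at hre
    simp at hre
  have hsq := mul_star_re_sq_add_im_sq q (2 * v)
  rw [hre, Zsqrtd.norm_mul, show Zsqrtd.norm (2 : GaussianInt) = 4 from rfl] at hsq
  nlinarith [q.norm_nonneg]

theorem abs_im_add_mul_lt_of_not_isValidDiff (hq : Odd q.norm) (hbad : ¬ IsValidDiff q δ)
    (hb : 2 * |(δ * star q).im| ≤ q.norm) (hs : 2 ∣ s) (hsre : (s * star q).re = 2)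
    (hsim : |(s * star q).im| ≤ q.norm) (he : 2 ∣ e - (δ + Zsqrtd.sqrtd * q))
    (hre : (e * star q).re = |(δ * star q).re| + 1 - q.norm) (him : |(e * star q).im| ≤ q.norm)
    {n : ℕ} (hn : n + |(δ * star q).re| + 1 ≤ q.norm) :
    ∀ k ≤ n, |(e * star q).im + k * (s * star q).im| < |(δ * star q).im| := by
  refine abs_add_mul_lt_of_forall him hsim hb fun k hk hle => ?_
  have hmul : (e + (k : ℤ) * s) * star q = e * star q + (k : ℤ) * (s * star q) := by ring
  have hkre : ((e + (k : ℤ) * s) * star q).re = |(δ * star q).re| + 1 - q.norm + 2 * k := by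
    rw [hmul, Zsqrtd.re_add, Zsqrtd.re_smul, hre, hsre]
    ring
  have hkim : ((e + (k : ℤ) * s) * star q).im = (e * star q).im + k * (s * star q).im := by
    rw [hmul, Zsqrtd.im_add, Zsqrtd.im_smul]
  rw [← hkim] at hle ⊢
  refine abs_im_lt_of_not_isValidDiff hq hbad ?_ ?_ hle
  · rw [add_sub_right_comm]
    exact dvd_add he (hs.mul_left _)
  · rw [hkre]
    grind

theorem IsValidDiff.of_isCoprime (hq : Odd q.norm) (hcop : IsCoprime q.re q.im) (hδ : ¬ 2 ∣ δ)
    (hlt : δ.norm < q.norm) (hb : 2 * |(δ * star q).im| ≤ q.norm) : IsValidDiff q δ := by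
  by_contra hbad
  have hpos : 0 < q.norm := δ.norm_nonneg.trans_lt hlt
  have hwidth : 0 < q.norm - |(δ * star q).re| := sub_pos.2 (abs_mul_star_re_lt hlt)
  have hgcd : (Int.gcd q.re q.im : ℤ) = 1 := by
    exact_mod_cast Int.isCoprime_iff_gcd_eq_one.1 hcop
  obtain ⟨s, hs, hsre, hsim⟩ := exists_two_dvd_sub_re_eq_gcd_mul_abs_im_le (δ := 0) (x := 2) hpos
    (by simp [hgcd])
  obtain ⟨e, he, hre, him⟩ := exists_two_dvd_sub_re_eq_gcd_mul_abs_im_le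
    (δ := δ + Zsqrtd.sqrtd * q) (x := |(δ * star q).re| + 1 - q.norm) hpos (by
      rw [hgcd, mul_one, add_mul, sqrtd_mul_self_mul_star, Zsqrtd.re_add]
      grind)
  rw [sub_zero] at hs
  rw [hgcd, one_mul] at hsim him
  obtain ⟨n, hn⟩ := Int.eq_ofNat_of_zero_le (Int.sub_nonneg_of_le hwidth)
  have hwalk := abs_im_add_mul_lt_of_not_isValidDiff hq hbad hb hs hsre hsim he hre him
    (n := n) (by omega)
  have hshort : |n * (s * star q).im| ≤ |2 * (δ * star q).im| := by
    have hfirst := hwalk 0 n.zero_le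
    have hlast := hwalk n le_rfl
    rw [Nat.cast_zero, zero_mul, add_zero] at hfirst
    generalize n * (s * star q).im = t at hlast ⊢
    grind
  have hlong : (2 * (δ * star q).im) ^ 2 < (n * (s * star q).im) ^ 2 := by
    rw [← hn]
    apply four_mul_sq_lt_of_le_sq_add_four hwidth hpos.le (four_mul_norm_le_im_sq_add_four hs hsre)
    linear_combination mul_star_re_sq_add_im_sq_add_le hq hδ hlt + sq_abs (δ * star q).re
  exact (sq_le_sq.2 hshort).not_gt hlong

end Walk

section NormLt

variable {q δ : GaussianInt}

theorem IsValidDiff.of_norm_lt_of_abs_im_le_abs_re (hq : Odd q.norm) (hlt : δ.norm < q.norm)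
    (hab : |(δ * star q).im| ≤ |(δ * star q).re|) : IsValidDiff q δ := by
  by_cases hδ : 2 ∣ δ
  · exact .of_two_dvd hq hδ hlt
  by_contra hbad
  have hwidth := width_sq_le_of_not_isValidDiff hq hlt hδ hbad hab
  have hb : 2 * |(δ * star q).im| ≤ q.norm := by
    apply two_mul_abs_le_of_sq_le q.norm_nonneg hwidth
    linear_combination mul_star_re_sq_add_im_sq_add_le hq hδ hlt + sq_abs (δ * star q).re
  by_cases hcop : IsCoprime q.re q.im
  · exact hbad (.of_isCoprime hq hcop hδ hlt hb)
  · exact hbad (.of_not_isCoprime hq hcop hlt hb)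

theorem IsValidDiff.of_norm_lt (hq : Odd q.norm) (hlt : δ.norm < q.norm) : IsValidDiff q δ := by
  rcases le_total |(δ * star q).im| |(δ * star q).re| with hab | hab
  · exact .of_norm_lt_of_abs_im_le_abs_re hq hlt hab
  · apply IsValidDiff.of_sqrtd_mul
    apply IsValidDiff.of_norm_lt_of_abs_im_le_abs_re hq
    · rwa [Zsqrtd.norm_mul, show Zsqrtd.norm (Zsqrtd.sqrtd : GaussianInt) = 1 from rfl, one_mul]
    · rwa [sqrtd_mul_mul_star_re, sqrtd_mul_mul_star_im, abs_neg]

end NormLt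

theorem stmt4_general (q : GaussianInt) (hq : Odd q.norm) :
    (∀ δ : GaussianInt, δ.norm < q.norm → IsValidDiff q δ) ∧
    (∀ δA δB : GaussianInt, δA.norm < q.norm → δB.norm < q.norm → (δA, δB) ≠ (0, 0) →
      IsDistanceValidPair q δA δB) :=
  ⟨fun _ => .of_norm_lt hq, fun _ _ hA hB hne => ⟨.of_norm_lt hq hA, .of_norm_lt hq hB, hne⟩⟩

/-- Let `q` be a Gaussian prime with `N(q) ≥ 5`. Every Gaussian integer `δ` with
`N(δ) < N(q)` is a valid difference; in particular every pair `(δA, δB) ≠ (0, 0)` with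
`N(δA) < N(q)` and `N(δB) < N(q)` is a distance-valid difference pair. -/
theorem stmt4 (q : GaussianInt) (hq : Prime q) (hq5 : 5 ≤ q.norm) :
    (∀ δ : GaussianInt, δ.norm < q.norm → IsValidDiff q δ) ∧
    (∀ δA δB : GaussianInt, δA.norm < q.norm → δB.norm < q.norm → (δA, δB) ≠ (0, 0) →
      IsDistanceValidPair q δA δB) :=
  stmt4_general q (odd_norm_of_prime hq (by omega))
end

section
/- Let q be a Gaussian prime with N(q) ≥ 5, and let (δ_A, δ_B) be a distance-valid difference pair such that δ_A is a unit of ℤ[i] or δ_B is a unit of ℤ[i]. Then there exists a distance-valid difference pair (δ′_A, δ′_B) with δ′_A·δ_B − δ′_B·δ_A = 1. -/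
open GaussianInt

/-!
The disc of radius `|q|/2` about the origin is inscribed in the square of valid symbols, so every
`w` with `4 * N(w) < N(q)` is a valid symbol, and hence a valid difference because `0` is one too.
Since `N(q) ≥ 5` this covers all units. If `δA` is a unit, `(0, -δA⁻¹)` is therefore a
distance-valid solution of the determinant equation; if `δB` is a unit, `(δB⁻¹, 0)` is one.
-/

theorem sq_re_le_norm {d : ℤ} (hd : d ≤ 0) (z : ℤ√d) : z.re ^ 2 ≤ z.norm := by
  rw [Zsqrtd.norm_def]
  nlinarith [mul_nonneg (neg_nonneg.2 hd) (sq_nonneg z.im)]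

theorem sq_im_le_norm {d : ℤ} (hd : d < 0) (z : ℤ√d) : z.im ^ 2 ≤ z.norm := by
  have h : 0 ≤ (-d - 1) * z.im ^ 2 := mul_nonneg (by lia) (sq_nonneg z.im)
  rw [Zsqrtd.norm_def]
  nlinarith [sq_nonneg z.re]

theorem two_mul_abs_lt_of_sq_le_mul {R : Type*} [CommRing R] [LinearOrder R]
    [IsStrictOrderedRing R] {x m n : R} (hn : 0 < n) (hmn : 4 * m < n) (hx : x ^ 2 ≤ m * n) :
    2 * |x| < n := by
  have h : (2 * x) ^ 2 < n ^ 2 := calc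
    (2 * x) ^ 2 = 4 * x ^ 2 := by ring
    _ ≤ 4 * (m * n) := by gcongr
    _ = 4 * m * n := by ring
    _ < n * n := by gcongr
    _ = n ^ 2 := (sq n).symm
  simpa only [abs_mul, abs_two] using abs_lt_of_sq_lt_sq h hn.le

theorem isValidSymbol_of_four_mul_norm_lt {q w : GaussianInt} (h : 4 * w.norm < q.norm) :
    IsValidSymbol q w := by
  have hq : 0 < q.norm := by linarith [GaussianInt.norm_nonneg w]
  have hnorm : (w * star q).norm = w.norm * q.norm := by
    rw [Zsqrtd.norm_mul, Zsqrtd.norm_conj]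
  exact ⟨two_mul_abs_lt_of_sq_le_mul hq h (hnorm ▸ sq_re_le_norm (by decide) _),
    two_mul_abs_lt_of_sq_le_mul hq h (hnorm ▸ sq_im_le_norm (by decide) _)⟩

theorem isValidDiff_of_four_mul_norm_lt {q w : GaussianInt} (h : 4 * w.norm < q.norm) :
    IsValidDiff q w := by
  have h0 : 4 * (0 : GaussianInt).norm < q.norm := by
    rw [Zsqrtd.norm_zero]
    linarith [GaussianInt.norm_nonneg w]
  exact ⟨w, 0, isValidSymbol_of_four_mul_norm_lt h, isValidSymbol_of_four_mul_norm_lt h0,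
    (sub_zero w).symm⟩

theorem isValidDiff_zero {q : GaussianInt} (hq : 0 < q.norm) : IsValidDiff q 0 :=
  isValidDiff_of_four_mul_norm_lt (by rwa [Zsqrtd.norm_zero, mul_zero])

theorem isValidDiff_of_isUnit {q v : GaussianInt} (hq : 5 ≤ q.norm) (hv : IsUnit v) :
    IsValidDiff q v :=
  isValidDiff_of_four_mul_norm_lt (by
    rwa [(Zsqrtd.norm_eq_one_iff' (by decide) v).2 hv, mul_one])

theorem isDistanceValidPair_zero_left {q v : GaussianInt} (hq : 5 ≤ q.norm) (hv : IsUnit v) :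
    IsDistanceValidPair q 0 v :=
  ⟨isValidDiff_zero (by lia), isValidDiff_of_isUnit hq hv,
    fun h0 ↦ hv.ne_zero (Prod.mk.inj h0).2⟩

theorem isDistanceValidPair_zero_right {q v : GaussianInt} (hq : 5 ≤ q.norm) (hv : IsUnit v) :
    IsDistanceValidPair q v 0 :=
  ⟨isValidDiff_of_isUnit hq hv, isValidDiff_zero (by lia),
    fun h0 ↦ hv.ne_zero (Prod.mk.inj h0).1⟩

theorem stmt5_general {q : GaussianInt} (hq : 5 ≤ q.norm) {δA δB : GaussianInt}
    (hu : IsUnit δA ∨ IsUnit δB) :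
    ∃ δA' δB' : GaussianInt, IsDistanceValidPair q δA' δB' ∧
      δA' * δB - δB' * δA = 1 := by
  rcases hu with ⟨u, rfl⟩ | ⟨u, rfl⟩
  · exact ⟨0, -↑u⁻¹, isDistanceValidPair_zero_left hq u⁻¹.isUnit.neg, by simp⟩
  · exact ⟨↑u⁻¹, 0, isDistanceValidPair_zero_right hq u⁻¹.isUnit, by simp⟩

/-- Let `q` be a Gaussian prime with `N(q) ≥ 5` and let `(δA, δB)` be a
distance-valid difference pair with `δA` or `δB` a unit of `ℤ[i]`. Then there exists a
distance-valid difference pair `(δA', δB')` with `δA'·δB − δB'·δA = 1`. -/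
theorem stmt5 (q : GaussianInt) (hq : Prime q) (hq5 : 5 ≤ q.norm)
    (δA δB : GaussianInt) (h : IsDistanceValidPair q δA δB)
    (hu : IsUnit δA ∨ IsUnit δB) :
    ∃ δA' δB' : GaussianInt, IsDistanceValidPair q δA' δB' ∧
      δA' * δB - δB' * δA = 1 := by
  exact stmt5_general hq5 hu
end

section
/- Let q be a Gaussian prime with N(q) ≥ 5, and let (δ_A, δ_B) be a distance-valid difference pair with δ_A ≠ 0, δ_B ≠ 0 and gcd(δ_A, δ_B) a unit of ℤ[i] (a nontrivial characteristic difference). Then there exists a distance-valid difference pair (δ′_A, δ′_B) with gcd(δ′_A, δ′_B) a unit such that N(δ′_A·δ_B − δ′_B·δ_A) = 1. -/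
open GaussianInt

/-! Valid differences are the lattice points of the Minkowski sum of the symbol set with itself: in
the plane, a lattice point of twice the convex hull of a lattice-convex set `S` is a sum of two
points of `S`. So `Λ_q` is lattice-convex and stable under multiplication by `i`, and hence
contains every Gaussian integer of the form `ζ * a` with `a ∈ Λ_q`, `ζ ∈ ℚ(i)` and
`|Re ζ| + |Im ζ| ≤ 1`.

Let `a, b ∈ Λ_q` be coprime with `N(b) ≤ N(a)`, and reduce the Bézout identity to
`c * b - b' * a = 1` with `c` a least remainder modulo `a`. Both coordinates of `c / a` are at most
`1 / 2` in absolute value, so `c ∈ Λ_q`. Moreover `b' / b = c / a - 1 / (a * b)` is a small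
perturbation of `c / a`. If `N(b) ≥ 8`, then `a ∤ 2 * c` keeps `c / a` away from the corners of the
square `|Re ζ|, |Im ζ| ≤ 1 / 2`, far enough to absorb the perturbation, so `b' ∈ Λ_q`. If
`N(b) < 8`, then `N(b') ≤ 4` and `b' = ζ * 2` with `|Re ζ| + |Im ζ| ≤ 1`, where `2 ∈ Λ_q` because
`1` is a symbol as soon as a nonzero symbol exists.
-/

open Module
open scoped Pointwise

section Convex

lemma convex_setOf_abs_lt {𝕜 E : Type*} [Field 𝕜] [LinearOrder 𝕜] [IsStrictOrderedRing 𝕜]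
    [AddCommGroup E] [Module 𝕜 E] (φ : E →ₗ[𝕜] 𝕜) (r : 𝕜) : Convex 𝕜 {z | |φ z| < r} := by
  simp only [abs_lt]
  exact (convex_Ioo (-r) r).linear_preimage φ

lemma exists_fin_convexCombination_of_mem_convexHull {𝕜 E : Type*} [Field 𝕜] [LinearOrder 𝕜]
    [IsStrictOrderedRing 𝕜] [AddCommGroup E] [Module 𝕜 E] [Module.Finite 𝕜 E] {n : ℕ}
    (hn : finrank 𝕜 E ≤ n) {s : Set E} {x : E} (hx : x ∈ convexHull 𝕜 s) :
    ∃ (z : Fin (n + 1) → E) (w : Fin (n + 1) → 𝕜), (∀ i, z i ∈ s) ∧ (∀ i, 0 ≤ w i) ∧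
      ∑ i, w i = 1 ∧ ∑ i, w i • z i = x := by
  obtain ⟨ι, _, z, w, hz, hind, hw, hsum, hcomb⟩ := eq_pos_convex_span_of_mem_convexHull hx
  have : Nonempty ι := not_isEmpty_iff.1 fun _ => by simp at hsum
  have hcard : Fintype.card ι ≤ Fintype.card (Fin (n + 1)) := by
    have hspan := Submodule.finrank_le (vectorSpan 𝕜 (Set.range z))
    have hindep := hind.card_le_finrank_succ
    rw [Fintype.card_fin]
    omega
  obtain ⟨e⟩ := Function.Embedding.nonempty_of_card_le hcard
  have hextend (i) : Function.extend e w 0 (e i) = w i := e.injective.extend_apply ..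
  have hzero (i) (hi : i ∉ Set.range e) : Function.extend e w 0 i = 0 :=
    Function.extend_apply' _ _ _ hi
  refine ⟨z ∘ Function.invFun e, Function.extend e w 0, fun i => hz ⟨_, rfl⟩, fun i => ?_, ?_, ?_⟩
  · by_cases hi : i ∈ Set.range e
    · obtain ⟨j, rfl⟩ := hi
      exact (hextend j).symm ▸ (hw j).le
    · exact (hzero i hi).ge
  · rw [← hsum]
    exact (Fintype.sum_of_injective e e.injective _ _ hzero fun i => (hextend i).symm).symm
  · rw [← hcomb]
    refine (Fintype.sum_of_injective e e.injective _ _ (fun i hi => ?_) fun i => ?_).symm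
    · rw [hzero i hi, zero_smul]
    · rw [hextend, Function.comp_apply, Function.leftInverse_invFun e.injective]

end Convex

lemma exists_pos_int_mul_eq_intCast {ι : Type*} [Finite ι] (w : ι → ℚ) :
    ∃ D : ℤ, 0 < D ∧ ∀ i, ∃ m : ℤ, (m : ℚ) = D * w i := by
  obtain ⟨⟨b, hb⟩, h⟩ := IsLocalization.exist_integer_multiples_of_finite (nonZeroDivisors ℤ) w
  refine ⟨b ^ 2, sq_pos_of_ne_zero (nonZeroDivisors.ne_zero hb), fun i => ?_⟩
  obtain ⟨m, hm⟩ := h i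
  have hm' : (m : ℚ) = b * w i := hm.trans (zsmul_eq_mul (w i) b)
  exact ⟨b * m, by push_cast; rw [hm']; ring⟩

lemma exists_eq_mul_abs {R : Type*} [Ring R] [LinearOrder R] (x : R) :
    ∃ s : R, (s = 1 ∨ s = -1) ∧ x = s * |x| := by
  rcases abs_choice x with h | h
  · exact ⟨1, .inl rfl, by rw [h, one_mul]⟩
  · exact ⟨-1, .inr rfl, by rw [h, neg_mul_neg, one_mul]⟩

section LatticeConvex

variable {G V : Type*} [AddCommGroup G] [AddCommGroup V] [Module ℚ V] {f : G →+ V} {S : Set G}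

/-- `S ⊆ G` is lattice-convex for the embedding `f : G →+ V` into a rational vector space if it
contains every element of `G` that lies in its convex hull. -/
def IsLatticeConvex (f : G →+ V) (S : Set G) : Prop :=
  ∀ ⦃g : G⦄, f g ∈ convexHull ℚ (f '' S) → g ∈ S

lemma isLatticeConvex_preimage (f : G →+ V) {K : Set V} (hK : Convex ℚ K) :
    IsLatticeConvex f (f ⁻¹' K) :=
  fun _ hg => convexHull_min (Set.image_preimage_subset f K) hK hg

lemma IsLatticeConvex.mem_of_zsmul_eq_sum (hS : IsLatticeConvex f S) {ι : Type*} {t : Finset ι}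
    {u : ι → G} {p : G} {a : ι → ℤ} {D : ℤ} (hD : 0 < D) (hu : ∀ i ∈ t, u i ∈ S)
    (ha : ∀ i ∈ t, 0 ≤ a i) (hsum : ∑ i ∈ t, a i = D) (h : D • p = ∑ i ∈ t, a i • u i) :
    p ∈ S := by
  have hD' : (0 : ℚ) < D := mod_cast hD
  have hp : f p = ∑ i ∈ t, ((a i : ℚ) / D) • f (u i) := by
    have hfp : (D : ℚ) • f p = ∑ i ∈ t, (a i : ℚ) • f (u i) := by
      simpa only [map_sum, map_zsmul, Int.cast_smul_eq_zsmul] using congrArg f h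
    rw [← inv_smul_smul₀ hD'.ne' (f p), hfp, Finset.smul_sum]
    simp only [smul_smul, inv_mul_eq_div]
  refine hS (hp ▸ (convex_convexHull ℚ (f '' S)).sum_mem (fun i hi => ?_) ?_ fun i hi => ?_)
  · exact div_nonneg (mod_cast ha i hi) hD'.le
  · rw [← Finset.sum_div, ← Int.cast_sum, hsum, div_self hD'.ne']
  · exact subset_convexHull ℚ _ (Set.mem_image_of_mem f (hu i hi))

lemma IsLatticeConvex.mem_of_zsmul_eq (hS : IsLatticeConvex f S) {u v w p : G} (hu : u ∈ S)
    (hv : v ∈ S) (hw : w ∈ S) {D a b c : ℤ} (hD : 0 < D) (ha : 0 ≤ a) (hb : 0 ≤ b) (hc : 0 ≤ c)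
    (hsum : a + b + c = D) (h : D • p = a • u + b • v + c • w) : p ∈ S :=
  hS.mem_of_zsmul_eq_sum (t := Finset.univ) (u := ![u, v, w]) (a := ![a, b, c]) hD
    (by simp [Fin.forall_fin_succ, hu, hv, hw]) (by simp [Fin.forall_fin_succ, ha, hb, hc])
    (by simpa [Fin.sum_univ_three] using hsum) (by simpa [Fin.sum_univ_three] using h)

lemma IsLatticeConvex.mem_add_self_of_le_weight (hS : IsLatticeConvex f S) {u v w d : G}
    (hu : u ∈ S) (hv : v ∈ S) (hw : w ∈ S) {D a b c : ℤ} (hD : 0 < D) (ha : 0 ≤ a) (hb : 0 ≤ b)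
    (hc : D ≤ c) (hsum : a + b + c = 2 * D) (h : D • d = a • u + b • v + c • w) :
    d ∈ S + S := by
  have hdw : d - w ∈ S :=
    hS.mem_of_zsmul_eq hu hv hw hD ha hb (sub_nonneg.2 hc) (by linarith)
      (by linear_combination (norm := module) h)
  exact Set.mem_add.2 ⟨w, hw, d - w, hdw, add_sub_cancel w d⟩

-- When all weights are less than `D`, the point `u + v + w - d` lies in the triangle. Replacing the
-- vertex of least weight `a` by it puts `d` into a triangle with `D - a` in place of `D`.
lemma IsLatticeConvex.mem_add_self_of_zsmul_eq (hS : IsLatticeConvex f S) {u v w d : G}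
    (hu : u ∈ S) (hv : v ∈ S) (hw : w ∈ S) {D a b c : ℤ} (hD : 0 < D) (ha : 0 ≤ a) (hb : 0 ≤ b)
    (hc : 0 ≤ c) (hsum : a + b + c = 2 * D) (h : D • d = a • u + b • v + c • w) :
    d ∈ S + S := by
  induction hn : D.toNat using Nat.strong_induction_on generalizing u v w D a b c with
  | _ n ih =>
    wlog hmin : a ≤ b ∧ a ≤ c generalizing u v w a b c
    · by_cases hbc : b ≤ c
      · exact this hv hu hw hb ha hc (by linarith) (by rw [h]; abel) (by omega)
      · exact this hw hu hv hc ha hb (by linarith) (by rw [h]; abel) (by omega)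
    wlog hbc : b ≤ c generalizing v w b c
    · exact this hw hv hc hb (by linarith) (by rw [h]; abel) hmin.symm (by omega)
    rcases le_or_gt D c with hDc | hcD
    · exact hS.mem_add_self_of_le_weight hu hv hw hD ha hb hDc hsum h
    have hp : u + v + w - d ∈ S :=
      hS.mem_of_zsmul_eq hu hv hw hD (a := D - a) (b := D - b) (c := D - c)
        (by omega) (by omega) (by omega) (by linarith) (by linear_combination (norm := module) -h)
    exact ih (D - a).toNat (by omega) hp hv hw (D := D - a) (a := a) (b := b - a) (c := c - a)
      (by omega) ha (by omega) (by omega) (by linarith)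
      (by linear_combination (norm := module) h) rfl

lemma IsLatticeConvex.mem_add_self_of_half_mem_convexHull [Module.Finite ℚ V]
    (hV : finrank ℚ V ≤ 2) (hf : Function.Injective f) (hS : IsLatticeConvex f S) {d : G}
    (hd : (2⁻¹ : ℚ) • f d ∈ convexHull ℚ (f '' S)) : d ∈ S + S := by
  obtain ⟨z, x, hz, hx, hsum, hcomb⟩ := exists_fin_convexCombination_of_mem_convexHull hV hd
  choose v hv hvz using hz
  obtain ⟨D, hD, hm⟩ := exists_pos_int_mul_eq_intCast x
  choose m hm using hm
  have hm0 (i) : 0 ≤ 2 * m i := by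
    have : (0 : ℚ) ≤ m i := by rw [hm]; exact mul_nonneg (mod_cast hD.le) (hx i)
    exact mul_nonneg zero_le_two (mod_cast this)
  rw [Fin.sum_univ_three] at hsum hcomb
  refine hS.mem_add_self_of_zsmul_eq (hv 0) (hv 1) (hv 2) hD (hm0 0) (hm0 1) (hm0 2) ?_ (hf ?_)
  · have : (2 * m 0 + 2 * m 1 + 2 * m 2 : ℚ) = 2 * D := by
      rw [hm, hm, hm]
      linear_combination 2 * (D : ℚ) * hsum
    exact mod_cast this
  · simp only [map_add, map_zsmul, hvz, ← Int.cast_smul_eq_zsmul ℚ, Int.cast_mul, hm]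
    push_cast
    linear_combination (norm := module) (-2 * D : ℚ) • hcomb

theorem IsLatticeConvex.add_self [Module.Finite ℚ V] (hV : finrank ℚ V ≤ 2)
    (hf : Function.Injective f) (hS : IsLatticeConvex f S) : IsLatticeConvex f (S + S) := by
  intro d hd
  refine hS.mem_add_self_of_half_mem_convexHull hV hf ?_
  have hconv := convex_convexHull ℚ (f '' S)
  refine convexHull_min ?_ (hconv.smul_preimage (2⁻¹ : ℚ)) hd
  rintro _ ⟨_, ⟨s, hs, t, ht, rfl⟩, rfl⟩
  have hhalves := hconv (subset_convexHull ℚ _ (Set.mem_image_of_mem f hs))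
    (subset_convexHull ℚ _ (Set.mem_image_of_mem f ht)) (a := 2⁻¹) (b := 2⁻¹)
    (by norm_num) (by norm_num) (by norm_num)
  simpa only [Set.mem_preimage, map_add, smul_add] using hhalves

lemma IsLatticeConvex.mem_of_abs_add_abs_le (hS : IsLatticeConvex f S)
    (hneg : ∀ g ∈ S, -g ∈ S) {u v g : G} (hu : u ∈ S) (hv : v ∈ S) {n x y : ℤ} (hn : 0 < n)
    (hxy : |x| + |y| ≤ n) (h : n • g = x • u + y • v) : g ∈ S := by
  have sign_smul_mem {s : ℤ} (hs : s = 1 ∨ s = -1) {w : G} (hw : w ∈ S) : s • w ∈ S := by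
    rcases hs with rfl | rfl
    · rwa [one_zsmul]
    · rw [neg_one_zsmul]
      exact hneg w hw
  have hzero : (0 : G) ∈ S :=
    hS.mem_of_zsmul_eq hu (hneg u hu) hu (D := 2) (a := 1) (b := 1) (c := 0)
      (by norm_num) (by norm_num) (by norm_num) le_rfl (by norm_num) (by module)
  obtain ⟨s, hs, hx⟩ := exists_eq_mul_abs x
  obtain ⟨t, ht, hy⟩ := exists_eq_mul_abs y
  refine hS.mem_of_zsmul_eq (sign_smul_mem hs hu) (sign_smul_mem ht hv) hzero hn (abs_nonneg x)
    (abs_nonneg y) (sub_nonneg.2 hxy) (by ring) ?_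
  rw [h, smul_zero, add_zero, smul_smul, smul_smul, mul_comm |x|, mul_comm |y|, ← hx, ← hy]

end LatticeConvex

section GaussianInt

/-- The embedding of `ℤ[i]` as the lattice `ℤ × ℤ` in the rational plane. -/
def toRatProd : GaussianInt →+ ℚ × ℚ where
  toFun w := (w.re, w.im)
  map_zero' := by simp
  map_add' w z := by simp

lemma toRatProd_injective : Function.Injective toRatProd := by
  intro w z h
  simpa [toRatProd, Zsqrtd.ext_iff] using h

lemma norm_eq_re_sq_add_im_sq (w : GaussianInt) : w.norm = w.re ^ 2 + w.im ^ 2 := by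
  rw [Zsqrtd.norm_def]
  ring

lemma re_sq_add_im_sq_mul_star (c a : GaussianInt) :
    (c * star a).re ^ 2 + (c * star a).im ^ 2 = c.norm * a.norm := by
  rw [← norm_eq_re_sq_add_im_sq, Zsqrtd.norm_mul, Zsqrtd.norm_conj]

lemma abs_re_add_abs_im_le_norm (w : GaussianInt) : |w.re| + |w.im| ≤ w.norm := by
  rw [norm_eq_re_sq_add_im_sq]
  exact add_le_add ((Int.le_self_sq _).trans_eq (sq_abs _)) ((Int.le_self_sq _).trans_eq (sq_abs _))

lemma norm_le_five_of_norm_lt_eight {b : GaussianInt} (hb : b.norm < 8) : b.norm ≤ 5 := by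
  rw [norm_eq_re_sq_add_im_sq] at *
  have hre : |b.re| < 3 := abs_lt_of_sq_lt_sq (by linarith [sq_nonneg b.im]) (by norm_num)
  have him : |b.im| < 3 := abs_lt_of_sq_lt_sq (by linarith [sq_nonneg b.re]) (by norm_num)
  rw [← sq_abs b.re, ← sq_abs b.im] at *
  have hre0 := abs_nonneg b.re
  have him0 := abs_nonneg b.im
  generalize |b.re| = x at *
  generalize |b.im| = y at *
  interval_cases x <;> interval_cases y <;> omega

lemma two_mul_abs_sub_mul_round_le (x : ℤ) {n : ℤ} (hn : 0 < n) :
    2 * |x - n * round ((x : ℚ) / n)| ≤ n := by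
  have hn' : (0 : ℚ) < n := mod_cast hn
  have : 2 * |(x : ℚ) - n * round ((x : ℚ) / n)| ≤ n := by
    calc 2 * |(x : ℚ) - n * round ((x : ℚ) / n)|
        = 2 * (n * |(x : ℚ) / n - round ((x : ℚ) / n)|) := by
          rw [← abs_of_pos hn', ← abs_mul, abs_of_pos hn', mul_sub, mul_div_cancel₀ _ hn'.ne']
      _ ≤ 2 * (n * (1 / 2)) := by gcongr; exact abs_sub_round _
      _ = n := by ring
  exact mod_cast this

lemma mod_mul_star (v a : GaussianInt) :
    v % a * star a = v * star a - (a.norm : GaussianInt) * (v / a) := by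
  rw [GaussianInt.mod_def, Zsqrtd.norm_eq_mul_conj]
  ring

lemma two_mul_abs_re_mod_mul_star_le (v : GaussianInt) {a : GaussianInt} (ha : a ≠ 0) :
    2 * |(v % a * star a).re| ≤ a.norm := by
  rw [mod_mul_star, GaussianInt.div_def, Zsqrtd.re_sub, Zsqrtd.re_smul]
  exact two_mul_abs_sub_mul_round_le _ (GaussianInt.norm_pos.2 ha)

lemma two_mul_abs_im_mod_mul_star_le (v : GaussianInt) {a : GaussianInt} (ha : a ≠ 0) :
    2 * |(v % a * star a).im| ≤ a.norm := by
  rw [mod_mul_star, GaussianInt.div_def, Zsqrtd.im_sub, Zsqrtd.im_smul]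
  exact two_mul_abs_sub_mul_round_le _ (GaussianInt.norm_pos.2 ha)

lemma two_mul_norm_mod_le (v : GaussianInt) {a : GaussianInt} (ha : a ≠ 0) :
    2 * (v % a).norm ≤ a.norm := by
  have hn := GaussianInt.norm_pos.2 ha
  have hre := pow_le_pow_left₀ (by positivity) (two_mul_abs_re_mod_mul_star_le v ha) 2
  have him := pow_le_pow_left₀ (by positivity) (two_mul_abs_im_mod_mul_star_le v ha) 2
  rw [mul_pow, sq_abs] at hre him
  refine le_of_mul_le_mul_right ?_ hn
  linarith [re_sq_add_im_sq_mul_star (v % a) a]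

lemma two_mul_norm_sub_one_le (w : GaussianInt) : 2 * (w - 1).norm ≤ 3 * w.norm + 6 := by
  have h := GaussianInt.norm_nonneg (w + 2)
  simp only [norm_eq_re_sq_add_im_sq, Zsqrtd.re_add, Zsqrtd.im_add, Zsqrtd.re_sub, Zsqrtd.im_sub,
    Zsqrtd.re_one, Zsqrtd.im_one, Zsqrtd.re_ofNat, Zsqrtd.im_ofNat, Nat.cast_ofNat] at h ⊢
  linarith

lemma norm_le_four_of_norm_lt_eight {a b c b' : GaussianInt} (ha : a ≠ 0)
    (hle : b.norm ≤ a.norm) (hb : b.norm < 8) (hc : 2 * c.norm ≤ a.norm)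
    (hdet : c * b - b' * a = 1) : b'.norm ≤ 4 := by
  have hn := GaussianInt.norm_pos.2 ha
  have hM := GaussianInt.norm_nonneg b
  have hM5 := norm_le_five_of_norm_lt_eight hb
  have hcb : 2 * (c * b).norm ≤ a.norm * b.norm := by
    rw [Zsqrtd.norm_mul, ← mul_assoc]
    exact mul_le_mul_of_nonneg_right hc hM
  have hb'a : b'.norm * a.norm = (c * b - 1).norm := by
    rw [← Zsqrtd.norm_mul]
    congr 1
    linear_combination -hdet
  have hbound : 4 * (b'.norm * a.norm) ≤ 3 * (a.norm * b.norm) + 12 := by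
    linarith [two_mul_norm_sub_one_le (c * b)]
  by_contra! hlt
  have : 5 * a.norm ≤ b'.norm * a.norm := mul_le_mul_of_nonneg_right hlt hn.le
  generalize b.norm = M at *
  interval_cases M <;> omega

-- For the corner `⟨s, t⟩ = ±1 ± i` nearest to `2 * c / a`, the Gaussian integer
-- `⟨s, t⟩ * a - 2 * c` is nonzero and hence has norm at least `1`.
lemma norm_le_of_not_dvd_two_mul {a c : GaussianInt} (h : ¬a ∣ 2 * c) :
    a.norm ≤ (a.norm - 2 * |(c * star a).re|) ^ 2 + (a.norm - 2 * |(c * star a).im|) ^ 2 := by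
  obtain ⟨s, hs, hre⟩ := exists_eq_mul_abs (c * star a).re
  obtain ⟨t, ht, him⟩ := exists_eq_mul_abs (c * star a).im
  have hne : (⟨s, t⟩ * a - 2 * c : GaussianInt) ≠ 0 :=
    fun h0 => h ⟨⟨s, t⟩, by linear_combination -h0⟩
  have hmul : (⟨s, t⟩ * a - 2 * c) * star a =
      (a.norm : GaussianInt) * ⟨s, t⟩ - (2 : ℤ) * (c * star a) := by
    rw [Zsqrtd.norm_eq_mul_conj]
    push_cast
    ring
  have hnorm := re_sq_add_im_sq_mul_star (⟨s, t⟩ * a - 2 * c) a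
  rw [hmul, Zsqrtd.re_sub, Zsqrtd.im_sub, Zsqrtd.re_smul, Zsqrtd.re_smul, Zsqrtd.im_smul,
    Zsqrtd.im_smul, hre, him] at hnorm
  calc a.norm ≤ (⟨s, t⟩ * a - 2 * c).norm * a.norm :=
        le_mul_of_one_le_left (GaussianInt.norm_nonneg a) (GaussianInt.norm_pos.2 hne)
    _ = _ := by
      linear_combination -hnorm + (a.norm - 2 * |(c * star a).re|) ^ 2 * sq_eq_one_iff.2 hs +
        (a.norm - 2 * |(c * star a).im|) ^ 2 * sq_eq_one_iff.2 ht

lemma not_dvd_two_mul_of_four_lt_norm {a b c b' : GaussianInt} (ha : 4 < a.norm)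
    (hdet : c * b - b' * a = 1) : ¬a ∣ 2 * c := by
  rintro ⟨k, hk⟩
  have hdvd : a ∣ 2 := ⟨k * b - 2 * b', by linear_combination -2 * hdet + b * hk⟩
  have hnorm : a.norm ∣ 4 := map_dvd Zsqrtd.normMonoidHom hdvd
  exact (Int.le_of_dvd (by norm_num) hnorm).not_gt ha

lemma abs_add_abs_le_mul_of_corner {R : Type*} [CommRing R] [LinearOrder R]
    [IsStrictOrderedRing R] {n M x y g k : R} (hx : 2 * x ≤ n) (hy : 2 * y ≤ n)
    (hM : 8 ≤ M) (hcorner : n ≤ (n - 2 * x) ^ 2 + (n - 2 * y) ^ 2)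
    (hgk : g ^ 2 + k ^ 2 = n * M) : |g| + |k| ≤ M * (n - x - y) := by
  have hdist : n ≤ (2 * (n - x - y)) ^ 2 := by
    have := mul_nonneg (sub_nonneg.2 hx) (sub_nonneg.2 hy)
    linarith
  have hsq : (2 * (|g| + |k|)) ^ 2 ≤ (2 * (M * (n - x - y))) ^ 2 :=
    calc (2 * (|g| + |k|)) ^ 2 ≤ 8 * (n * M) := by
          linarith [sq_nonneg (|g| - |k|), sq_abs g, sq_abs k]
      _ ≤ M * (n * M) := mul_le_mul_of_nonneg_right hM (hgk ▸ by positivity)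
      _ = M ^ 2 * n := by ring
      _ ≤ M ^ 2 * (2 * (n - x - y)) ^ 2 := mul_le_mul_of_nonneg_left hdist (sq_nonneg M)
      _ = (2 * (M * (n - x - y))) ^ 2 := by ring
  have hnonneg : 0 ≤ M * (n - x - y) := mul_nonneg (by linarith) (by linarith)
  linarith [abs_le_of_sq_le_sq hsq (by linarith), le_abs_self (2 * (|g| + |k|))]

lemma abs_re_add_abs_im_mul_star_le {a b c b' : GaussianInt}
    (hre : 2 * |(c * star a).re| ≤ a.norm) (him : 2 * |(c * star a).im| ≤ a.norm)
    (hle : b.norm ≤ a.norm) (hb : 8 ≤ b.norm) (hdet : c * b - b' * a = 1) :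
    |(b' * star b).re| + |(b' * star b).im| ≤ b.norm := by
  have hn : 0 < a.norm := by linarith
  have hcorner := norm_le_of_not_dvd_two_mul
    (not_dvd_two_mul_of_four_lt_norm (by linarith) hdet)
  have herror := abs_add_abs_le_mul_of_corner hre him hb hcorner
    ((re_sq_add_im_sq_mul_star (star a) b).trans (by rw [Zsqrtd.norm_conj]))
  have hmul : (a.norm : GaussianInt) * (b' * star b) =
      (b.norm : GaussianInt) * (c * star a) - star a * star b := by
    rw [Zsqrtd.norm_eq_mul_conj, Zsqrtd.norm_eq_mul_conj]
    linear_combination -(star a * star b) * hdet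
  have hre_eq := congrArg (|Zsqrtd.re ·|) hmul
  have him_eq := congrArg (|Zsqrtd.im ·|) hmul
  simp only [Zsqrtd.re_sub, Zsqrtd.im_sub, Zsqrtd.re_smul, Zsqrtd.im_smul, abs_mul] at hre_eq him_eq
  refine le_of_mul_le_mul_left ?_ hn
  rw [abs_of_pos hn] at hre_eq him_eq
  rw [mul_add, hre_eq, him_eq]
  have hre_le := abs_sub (b.norm * (c * star a).re) (star a * star b).re
  have him_le := abs_sub (b.norm * (c * star a).im) (star a * star b).im
  rw [abs_mul, abs_of_pos (by linarith : 0 < b.norm)] at hre_le him_le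
  linarith

variable {T : Set GaussianInt}

lemma neg_mem_of_sqrtd_mul_mem (hI : ∀ w ∈ T, Zsqrtd.sqrtd * w ∈ T) {w : GaussianInt}
    (hw : w ∈ T) : -w ∈ T := by
  have hIIw := hI _ (hI w hw)
  rwa [← mul_assoc, Zsqrtd.dmuld, Int.cast_neg, Int.cast_one, neg_one_mul] at hIIw

lemma IsLatticeConvex.mem_of_abs_re_add_abs_im_le (hT : IsLatticeConvex toRatProd T)
    (hI : ∀ w ∈ T, Zsqrtd.sqrtd * w ∈ T) {a c : GaussianInt} (ha : a ∈ T) (ha0 : a ≠ 0)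
    (h : |(c * star a).re| + |(c * star a).im| ≤ a.norm) : c ∈ T := by
  refine hT.mem_of_abs_add_abs_le (fun w hw => neg_mem_of_sqrtd_mul_mem hI hw) ha (hI a ha)
    (GaussianInt.norm_pos.2 ha0) h ?_
  have hdecomp : c * star a = ((c * star a).re : GaussianInt) +
      Zsqrtd.sqrtd * ((c * star a).im : GaussianInt) := Zsqrtd.decompose
  simp only [zsmul_eq_mul, Zsqrtd.norm_eq_mul_conj]
  linear_combination a * hdecomp

lemma IsLatticeConvex.mem_of_norm_le_four (hT : IsLatticeConvex toRatProd T)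
    (hI : ∀ w ∈ T, Zsqrtd.sqrtd * w ∈ T) (h2 : 2 ∈ T) {c : GaussianInt} (hc : c.norm ≤ 4) :
    c ∈ T := by
  refine hT.mem_of_abs_re_add_abs_im_le hI h2 two_ne_zero ?_
  have hnorm2 : (2 : GaussianInt).norm = 4 := rfl
  have hre : (c * star 2).re = 2 * c.re := by simp [mul_comm]
  have him : (c * star 2).im = 2 * c.im := by simp [mul_comm]
  rw [norm_eq_re_sq_add_im_sq] at hc
  have hlt : |c.re| + |c.im| < 3 := lt_of_pow_lt_pow_left₀ 2 (by norm_num) <| by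
    linarith [sq_nonneg (|c.re| - |c.im|), sq_abs c.re, sq_abs c.im]
  rw [hnorm2, hre, him, abs_mul, abs_mul, abs_two]
  linarith

lemma IsLatticeConvex.exists_mul_sub_mul_eq_one_of_norm_le (hT : IsLatticeConvex toRatProd T)
    (hI : ∀ w ∈ T, Zsqrtd.sqrtd * w ∈ T) (h2 : 2 ∈ T) {a b : GaussianInt} (ha : a ∈ T)
    (hb : b ∈ T) (hab : IsCoprime a b) (hle : b.norm ≤ a.norm) :
    ∃ a' ∈ T, ∃ b' ∈ T, a' * b - b' * a = 1 := by
  have ha0 : a ≠ 0 := by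
    rintro rfl
    have hb0 : b = 0 := GaussianInt.norm_eq_zero.1 (le_antisymm hle (GaussianInt.norm_nonneg b))
    exact hab.ne_zero_or_ne_zero.elim (· rfl) (· hb0)
  obtain ⟨u, v, huv⟩ := hab
  have hdet : v % a * b - (-u - v / a * b) * a = 1 := by
    rw [GaussianInt.mod_def]
    linear_combination huv
  have hre := two_mul_abs_re_mod_mul_star_le v ha0
  have him := two_mul_abs_im_mod_mul_star_le v ha0
  refine ⟨v % a, hT.mem_of_abs_re_add_abs_im_le hI ha ha0 (by linarith), _, ?_, hdet⟩
  rcases lt_or_ge b.norm 8 with hb8 | hb8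
  · exact hT.mem_of_norm_le_four hI h2
      (norm_le_four_of_norm_lt_eight ha0 hle hb8 (two_mul_norm_mod_le v ha0) hdet)
  · have hb0 : b ≠ 0 := GaussianInt.norm_pos.1 (by linarith)
    exact hT.mem_of_abs_re_add_abs_im_le hI hb hb0
      (abs_re_add_abs_im_mul_star_le hre him hle hb8 hdet)

theorem IsLatticeConvex.exists_mul_sub_mul_eq_one (hT : IsLatticeConvex toRatProd T)
    (hI : ∀ w ∈ T, Zsqrtd.sqrtd * w ∈ T) (h2 : 2 ∈ T) {a b : GaussianInt} (ha : a ∈ T)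
    (hb : b ∈ T) (hab : IsCoprime a b) : ∃ a' ∈ T, ∃ b' ∈ T, a' * b - b' * a = 1 := by
  rcases le_total b.norm a.norm with hle | hle
  · exact hT.exists_mul_sub_mul_eq_one_of_norm_le hI h2 ha hb hab hle
  · obtain ⟨b', hb', a', ha', h⟩ :=
      hT.exists_mul_sub_mul_eq_one_of_norm_le hI h2 hb ha hab.symm hle
    exact ⟨-a', neg_mem_of_sqrtd_mul_mem hI ha', -b', neg_mem_of_sqrtd_mul_mem hI hb',
      by linear_combination h⟩

lemma sqrtd_mul_mem_add {S : Set GaussianInt} (hI : ∀ w ∈ S, Zsqrtd.sqrtd * w ∈ S) :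
    ∀ w ∈ S + S, Zsqrtd.sqrtd * w ∈ S + S := by
  rintro _ ⟨s, hs, t, ht, rfl⟩
  exact ⟨_, hI s hs, _, hI t ht, (mul_add _ _ _).symm⟩

lemma IsLatticeConvex.two_mem_add_self {S : Set GaussianInt} (hS : IsLatticeConvex toRatProd S)
    (hI : ∀ w ∈ S, Zsqrtd.sqrtd * w ∈ S) {w : GaussianInt} (hw : w ∈ S) (hw0 : w ≠ 0) :
    2 ∈ S + S := by
  have hone : (1 : GaussianInt) ∈ S := by
    refine hS.mem_of_abs_re_add_abs_im_le hI hw hw0 ?_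
    simpa only [one_mul, Zsqrtd.re_star, Zsqrtd.im_star, abs_neg] using
      abs_re_add_abs_im_le_norm w
  exact ⟨1, hone, 1, hone, one_add_one_eq_two⟩

end GaussianInt

section ValidSymbol

variable {q d : GaussianInt}

/-- The set of valid symbols modulo `q`, so that `Λ_q` is `validSymbols q - validSymbols q`. -/
def validSymbols (q : GaussianInt) : Set GaussianInt :=
  {w | IsValidSymbol q w}

lemma isLatticeConvex_validSymbols (q : GaussianInt) :
    IsLatticeConvex toRatProd (validSymbols q) := by
  let φ : (ℚ × ℚ) →ₗ[ℚ] ℚ := (2 * q.re : ℚ) • .fst ℚ ℚ ℚ + (2 * q.im : ℚ) • .snd ℚ ℚ ℚ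
  let ψ : (ℚ × ℚ) →ₗ[ℚ] ℚ := (2 * q.re : ℚ) • .snd ℚ ℚ ℚ - (2 * q.im : ℚ) • .fst ℚ ℚ ℚ
  have hφ (w : GaussianInt) : φ (toRatProd w) = (2 * (w * star q).re : ℤ) := by
    simp [φ, toRatProd]
    ring
  have hψ (w : GaussianInt) : ψ (toRatProd w) = (2 * (w * star q).im : ℤ) := by
    simp [ψ, toRatProd]
    ring
  have hpre : validSymbols q = toRatProd ⁻¹' ({z | |φ z| < q.norm} ∩ {z | |ψ z| < q.norm}) := by
    ext w
    simp only [validSymbols, IsValidSymbol, Set.mem_ofPred_eq, Set.preimage_inter,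
      Set.mem_inter_iff, Set.mem_preimage, hφ, hψ, ← Int.cast_abs, Int.cast_lt, abs_mul, abs_two]
  rw [hpre]
  exact isLatticeConvex_preimage _ ((convex_setOf_abs_lt φ _).inter (convex_setOf_abs_lt ψ _))

lemma sqrtd_mul_mem_validSymbols : ∀ w ∈ validSymbols q, Zsqrtd.sqrtd * w ∈ validSymbols q := by
  rintro w ⟨hre, him⟩
  have hmul : Zsqrtd.sqrtd * w * star q = ⟨-(w * star q).im, (w * star q).re⟩ := by
    rw [mul_assoc]
    exact (Zsqrtd.muld_val (w * star q).re (w * star q).im).trans (by rw [neg_one_mul])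
  exact ⟨by rwa [hmul, abs_neg], by rwa [hmul]⟩

lemma isValidDiff_iff_mem_add : IsValidDiff q d ↔ d ∈ validSymbols q + validSymbols q := by
  have hneg {w} (hw : w ∈ validSymbols q) : -w ∈ validSymbols q :=
    neg_mem_of_sqrtd_mul_mem sqrtd_mul_mem_validSymbols hw
  constructor
  · rintro ⟨w, w', hw, hw', rfl⟩
    exact Set.mem_add.2 ⟨w, hw, -w', hneg hw', (sub_eq_add_neg w w').symm⟩
  · intro hd
    obtain ⟨w, hw, w', hw', rfl⟩ := Set.mem_add.1 hd
    exact ⟨w, -w', hw, hneg hw', (sub_neg_eq_add w w').symm⟩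

lemma exists_mem_validSymbols_ne_zero (hd : IsValidDiff q d) (hd0 : d ≠ 0) :
    ∃ w ∈ validSymbols q, w ≠ 0 := by
  obtain ⟨w, w', hw, hw', rfl⟩ := hd
  by_cases hw0 : w = 0
  · exact ⟨w', hw', by rintro rfl; exact hd0 (by rw [hw0, sub_zero])⟩
  · exact ⟨w, hw, hw0⟩

end ValidSymbol

theorem stmt6_general (q δA δB : GaussianInt) (hA : IsValidDiff q δA) (hB : IsValidDiff q δB)
    (hgcd : IsUnit (EuclideanDomain.gcd δA δB)) :
    ∃ δA' δB' : GaussianInt, IsDistanceValidPair q δA' δB' ∧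
      IsUnit (EuclideanDomain.gcd δA' δB') ∧
      (δA' * δB - δB' * δA).norm = 1 := by
  have hco : IsCoprime δA δB := EuclideanDomain.gcd_isUnit_iff.1 hgcd
  obtain ⟨w, hw, hw0⟩ : ∃ w ∈ validSymbols q, w ≠ 0 :=
    hco.ne_zero_or_ne_zero.elim (exists_mem_validSymbols_ne_zero hA)
      (exists_mem_validSymbols_ne_zero hB)
  have hS := isLatticeConvex_validSymbols q
  obtain ⟨δA', hA', δB', hB', hdet⟩ :=
    (hS.add_self (by simp) toRatProd_injective).exists_mul_sub_mul_eq_one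
      (sqrtd_mul_mem_add sqrtd_mul_mem_validSymbols)
      (hS.two_mem_add_self sqrtd_mul_mem_validSymbols hw hw0) (isValidDiff_iff_mem_add.1 hA)
      (isValidDiff_iff_mem_add.1 hB) hco
  have hco' : IsCoprime δA' δB' := ⟨δB, -δA, by linear_combination hdet⟩
  refine ⟨δA', δB', ⟨isValidDiff_iff_mem_add.2 hA', isValidDiff_iff_mem_add.2 hB', fun h0 => ?_⟩,
    EuclideanDomain.gcd_isUnit_iff.2 hco', by rw [hdet, Zsqrtd.norm_one]⟩
  obtain ⟨hA0, hB0⟩ := Prod.mk.inj h0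
  exact hco'.ne_zero_or_ne_zero.elim (· hA0) (· hB0)

/-- Let `q` be a Gaussian prime with `N(q) ≥ 5` and let `(δA, δB)` be a
distance-valid difference pair with `δA ≠ 0`, `δB ≠ 0` and `gcd(δA, δB)` a unit (a nontrivial
characteristic difference). Then there exists a distance-valid difference pair `(δA', δB')`
with `gcd(δA', δB')` a unit such that `N(δA'·δB − δB'·δA) = 1`. -/
theorem stmt6 (q : GaussianInt) (hq : Prime q) (hq5 : 5 ≤ q.norm)
    (δA δB : GaussianInt) (h : IsDistanceValidPair q δA δB)
    (hA : δA ≠ 0) (hB : δB ≠ 0) (hgcd : IsUnit (EuclideanDomain.gcd δA δB)) :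
    ∃ δA' δB' : GaussianInt, IsDistanceValidPair q δA' δB' ∧
      IsUnit (EuclideanDomain.gcd δA' δB') ∧
      (δA' * δB - δB' * δA).norm = 1 :=
  stmt6_general q δA δB h.1 h.2.1 hgcd
end

section
/- Let κ, τ, γ, δ be Gaussian integers with gcd(κ, τ) a unit and gcd(γ, δ) a unit, and set Ξ = κ·δ − τ·γ. If N(Ξ) = 5, then there exists exactly one ε ∈ {1, −1, i, −i} such that Ξ ∣ κ + ε·γ and Ξ ∣ τ + ε·δ. -/
open GaussianInt

/-!
Let `c * γ + d * δ = 1` and `w = c * κ + d * τ`. Modulo `Ξ = κ * δ - τ * γ` the row `(κ, τ)` is `w`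
times the row `(γ, δ)`, so the two divisibility conditions say that `ε` is congruent to `-w`, and
`w` is invertible modulo `Ξ` because `κ` and `τ` are coprime. It remains to see that each nonzero
residue class modulo the prime `Ξ` of norm `5` contains exactly one unit. Since `5` splits in
`ℤ[i]`, Fermat's little theorem gives `w ^ 5 ≡ w` modulo `5`, and
`w ^ 5 - w = w * (w + 1) * (w - 1) * (w + i) * (w - i)`, hence `Ξ` divides one of the factors. Two
units differ by an element of norm at most `4`, so they are incongruent modulo `Ξ` unless equal.
-/

section CommRing

variable {R : Type*} [CommRing R] {κ τ γ δ c d : R}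

lemma det_dvd_add_mul_and_iff (h : c * γ + d * δ = 1) (ε : R) :
    (κ * δ - τ * γ ∣ κ + ε * γ ∧ κ * δ - τ * γ ∣ τ + ε * δ) ↔
      κ * δ - τ * γ ∣ c * κ + d * τ + ε := by
  constructor
  · rintro ⟨hκ, hτ⟩
    have hw : c * κ + d * τ + ε = c * (κ + ε * γ) + d * (τ + ε * δ) := by
      linear_combination (-ε) * h
    exact hw ▸ dvd_add (hκ.mul_left c) (hτ.mul_left d)
  · rintro ⟨m, hm⟩
    exact ⟨⟨γ * m + d, by linear_combination γ * hm - κ * h⟩,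
      ⟨δ * m - c, by linear_combination δ * hm - τ * h⟩⟩

lemma isCoprime_det_mul_add_mul (hκτ : IsCoprime κ τ) (h : c * γ + d * δ = 1) :
    IsCoprime (κ * δ - τ * γ) (c * κ + d * τ) := by
  obtain ⟨a, b, hab⟩ := hκτ
  exact ⟨a * d - b * c, a * γ + b * δ, by linear_combination (a * κ + b * τ) * h + hab⟩

end CommRing

section Zsqrtd

variable {d : ℤ}

lemma irreducible_of_irreducible_norm {x : ℤ√d} (hx : Irreducible x.norm) : Irreducible x :=
  have : IsLocalHom (Zsqrtd.normMonoidHom (d := d)) := ⟨fun z ↦ z.isUnit_iff_norm_isUnit.2⟩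
  hx.of_map (f := Zsqrtd.normMonoidHom)

lemma norm_add_add_norm_sub (a b : ℤ√d) :
    (a + b).norm + (a - b).norm = 2 * (a.norm + b.norm) := by
  simp only [Zsqrtd.norm_def, Zsqrtd.re_add, Zsqrtd.im_add, Zsqrtd.re_sub, Zsqrtd.im_sub]
  ring

lemma eq_zero_of_dvd_of_norm_lt_norm (hd : d < 0) {x y : ℤ√d} (hxy : x ∣ y)
    (hlt : y.norm < x.norm) : y = 0 :=
  (Zsqrtd.norm_eq_zero_iff hd y).1 <|
    Int.eq_zero_of_dvd_of_nonneg_of_lt (Zsqrtd.norm_nonneg hd.le y) hlt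
      (map_dvd Zsqrtd.normMonoidHom hxy)

lemma eq_of_dvd_sub_of_norm_lt (hd : d < 0) {x a b : ℤ√d} (hx : 2 * (a.norm + b.norm) < x.norm)
    (hab : x ∣ a - b) : a = b := by
  refine sub_eq_zero.1 (eq_zero_of_dvd_of_norm_lt_norm hd hab ?_)
  linarith [norm_add_add_norm_sub a b, Zsqrtd.norm_nonneg hd.le (a + b)]

lemma sqrtd_pow_of_odd {n : ℕ} (hn : Odd n) :
    (Zsqrtd.sqrtd : ℤ√d) ^ n = (d : ℤ√d) ^ (n / 2) * Zsqrtd.sqrtd := by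
  rw [← Zsqrtd.dmuld, ← sq, ← pow_mul, ← pow_succ, Nat.two_mul_div_two_add_one_of_odd hn]

lemma natCast_dvd_pow_sub_self_of_legendreSym_eq_one {p : ℕ} [Fact p.Prime] (hp : p ≠ 2)
    (hd : legendreSym p d = 1) (w : ℤ√d) : (p : ℤ√d) ∣ w ^ p - w := by
  obtain ⟨x, y⟩ := w
  have hre : (p : ℤ) ∣ x ^ p - x := by simp [← ZMod.intCast_zmod_eq_zero_iff_dvd]
  have him : (p : ℤ) ∣ d ^ (p / 2) * y ^ p - y := by
    have heuler : (d : ZMod p) ^ (p / 2) = 1 := by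
      rw [← legendreSym.eq_pow, hd, Int.cast_one]
    simp [← ZMod.intCast_zmod_eq_zero_iff_dvd, heuler]
  have hsqrtd := sqrtd_pow_of_odd (d := d) ((Fact.out : p.Prime).odd_of_ne_two hp)
  obtain ⟨r, hr⟩ :=
    exists_add_pow_prime_eq (Fact.out : p.Prime) (x : ℤ√d) (Zsqrtd.sqrtd * (y : ℤ√d))
  obtain ⟨m, hm⟩ := Int.cast_dvd_cast (α := ℤ√d) _ _ hre
  obtain ⟨n, hn⟩ := Int.cast_dvd_cast (α := ℤ√d) _ _ him
  push_cast at hm hn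
  rw [Zsqrtd.decompose, hr, mul_pow, hsqrtd]
  exact ⟨m + Zsqrtd.sqrtd * n + (x : ℤ√d) * (Zsqrtd.sqrtd * (y : ℤ√d)) * r,
    by linear_combination hm + Zsqrtd.sqrtd * hn⟩

end Zsqrtd

section GaussianInt

lemma pow_five_sub_self_eq_mul (w : GaussianInt) :
    w ^ 5 - w = w * (w + 1) * (w + -1) * (w + ⟨0, 1⟩) * (w + ⟨0, -1⟩) := by
  have hi : (⟨0, 1⟩ : GaussianInt) * ⟨0, -1⟩ = 1 := rfl
  have hi' : (⟨0, 1⟩ : GaussianInt) + ⟨0, -1⟩ = 0 := rfl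
  linear_combination (-w ^ 3 + w) * hi - (w ^ 4 - w ^ 2) * hi'

lemma prime_of_prime_norm {x : GaussianInt} (hx : Prime x.norm) : Prime x :=
  (irreducible_of_irreducible_norm hx.irreducible).prime

lemma prime_of_norm_eq_five {x : GaussianInt} (hx : x.norm = 5) : Prime x :=
  prime_of_prime_norm (hx ▸ Int.prime_ofNat_iff.2 Nat.prime_five)

lemma gaussianInt_isUnit_iff {ε : GaussianInt} :
    IsUnit ε ↔ ε ∈ ({1, -1, ⟨0, 1⟩, ⟨0, -1⟩} : Set GaussianInt) := by
  rw [← Zsqrtd.norm_eq_one_iff' (by decide)]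
  constructor
  · obtain ⟨a, b⟩ := ε
    intro h
    have hsq : a * a + b * b = 1 := by simpa [Zsqrtd.norm_def] using h
    obtain ⟨ha₁, ha₂⟩ : -1 ≤ a ∧ a ≤ 1 := by constructor <;> nlinarith
    obtain ⟨hb₁, hb₂⟩ : -1 ≤ b ∧ b ≤ 1 := by constructor <;> nlinarith
    interval_cases a <;> interval_cases b <;> simp_all [Zsqrtd.ext_iff]
  · rintro (rfl | rfl | rfl | rfl) <;> rfl

lemma exists_isUnit_dvd_add {x w : GaussianInt} (hx : x.norm = 5) (hw : ¬ x ∣ w) :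
    ∃ ε, IsUnit ε ∧ x ∣ w + ε := by
  have hx5 : x ∣ (5 : ℕ) := ⟨star x, by rw [← Zsqrtd.norm_eq_mul_conj, hx]; rfl⟩
  have : Fact (Nat.Prime 5) := ⟨Nat.prime_five⟩
  have hfermat : x ∣ w ^ 5 - w :=
    hx5.trans (natCast_dvd_pow_sub_self_of_legendreSym_eq_one (by decide) (by norm_num) w)
  simpa [pow_five_sub_self_eq_mul, (prime_of_norm_eq_five hx).dvd_mul, hw, or_assoc,
    gaussianInt_isUnit_iff] using hfermat

lemma existsUnique_isUnit_dvd_add {x w : GaussianInt} (hx : x.norm = 5) (hw : ¬ x ∣ w) :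
    ∃! ε, IsUnit ε ∧ x ∣ w + ε := by
  refine existsUnique_of_exists_of_unique (exists_isUnit_dvd_add hx hw) ?_
  rintro ε ε' ⟨hε, hxε⟩ ⟨hε', hxε'⟩
  rw [← Zsqrtd.norm_eq_one_iff' (by decide)] at hε hε'
  refine eq_of_dvd_sub_of_norm_lt (x := x) (by decide) ?_ ?_
  · rw [hε, hε', hx]
    decide
  · simpa only [add_sub_add_left_eq_sub] using dvd_sub hxε hxε'

end GaussianInt

/-- Let `κ, τ, γ, δ` be Gaussian integers with `gcd(κ, τ)` a unit and `gcd(γ, δ)`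
a unit, and set `Ξ = κ·δ − τ·γ`. If `N(Ξ) = 5`, then there exists exactly one
`ε ∈ {1, −1, i, −i}` such that `Ξ ∣ κ + ε·γ` and `Ξ ∣ τ + ε·δ`. -/
theorem stmt9 (κ τ γ δ : GaussianInt)
    (h1 : IsUnit (EuclideanDomain.gcd κ τ)) (h2 : IsUnit (EuclideanDomain.gcd γ δ))
    (hnorm : (κ * δ - τ * γ).norm = 5) :
    ∃! ε : GaussianInt,
      ε ∈ ({1, -1, ⟨0, 1⟩, ⟨0, -1⟩} : Set GaussianInt) ∧
      (κ * δ - τ * γ) ∣ κ + ε * γ ∧ (κ * δ - τ * γ) ∣ τ + ε * δ := by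
  obtain ⟨c, d, hcd⟩ := EuclideanDomain.gcd_isUnit_iff.1 h2
  have hcop : IsCoprime (κ * δ - τ * γ) (c * κ + d * τ) :=
    isCoprime_det_mul_add_mul (EuclideanDomain.gcd_isUnit_iff.1 h1) hcd
  have hndvd : ¬ κ * δ - τ * γ ∣ c * κ + d * τ := fun hdvd ↦
    (prime_of_norm_eq_five hnorm).not_isUnit (hcop.isUnit_of_dvd hdvd)
  simpa only [det_dvd_add_mul_and_iff hcd, gaussianInt_isUnit_iff] using
    existsUnique_isUnit_dvd_add hnorm hndvd
end

section
/- Let q be a Gaussian prime with N(q) ≥ 5 and regard the set Λ_q of valid differences as a subset of ℂ via the complex embedding. Every Gaussian integer whose complex embedding lies in the convex hull of Λ_q (taken in ℂ viewed as a real vector space) is itself a valid difference. -/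
open GaussianInt

/-!
Lattice polygons have the integer decomposition property: if `L` is a lattice in a plane and
`s ⊆ L`, then every point of `L` in `conv s + conv s` is a sum of two points of `L ∩ conv s`. The
valid symbols are the Gaussian integers in an open square symmetric about `0`, so `Λ_q` is the
sumset of the valid symbols with themselves, and a lattice point in the hull of the valid symbols is
a valid symbol.

For the decomposition property, write the given lattice point as `2x`, where by Carathéodory `x`
lies in a simplex with at most three vertices from `s`. If twice some barycentric coordinate of
`x` is at least `1`, say at the vertex `a`, then `2x = a + (2x - a)` is a decomposition. Otherwise
the simplex is a triangle `abc`, and the lattice point `p = a + b + c - 2x` lies in it. If `p` is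
a vertex, `2x` is the sum of the other two. If not, replacing a suitable vertex by `p` gives a
triangle that still contains `x` but, by the antiexchange property of convex hulls, not the
discarded vertex. It contains fewer lattice points, so this process terminates.
-/

open scoped Pointwise

section ConvexHull

variable {𝕜 E : Type*} [Field 𝕜] [LinearOrder 𝕜] [AddCommGroup E] [Module 𝕜 E]

theorem notMem_convexHull_erase_of_affineIndependent [DecidableEq E] {t : Finset E} {a : E}
    (ht : AffineIndependent 𝕜 ((↑) : t → E)) (ha : a ∈ t) :
    a ∉ convexHull 𝕜 (t.erase a : Set E) := by
  have himage : ((↑) : t → E) '' (Set.univ \ {⟨a, ha⟩}) = t.erase a := by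
    ext i
    simp [and_comm]
  rw [← himage]
  exact fun h ↦ ht.notMem_affineSpan_sdiff ⟨a, ha⟩ Set.univ (convexHull_subset_affineSpan _ h)

variable [IsStrictOrderedRing 𝕜]

theorem smul_add_sum_smul_mem_of_convex {ι : Type*} {s : Set E} {t : Finset ι} {r : 𝕜} {p : E}
    {w : ι → 𝕜} {z : ι → E} (hs : Convex 𝕜 s) (hr : 0 ≤ r) (hw : ∀ i ∈ t, 0 ≤ w i)
    (hsum : r + ∑ i ∈ t, w i = 1) (hp : p ∈ s) (hz : ∀ i ∈ t, z i ∈ s) :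
    r • p + ∑ i ∈ t, w i • z i ∈ s := by
  have hmem := hs.sum_mem (t := Finset.insertNone t) (w := fun o ↦ o.elim r w)
    (z := fun o ↦ o.elim p z) (Finset.forall_mem_insertNone.2 ⟨hr, hw⟩)
    (by rwa [Finset.sum_insertNone]) (Finset.forall_mem_insertNone.2 ⟨hp, hz⟩)
  rwa [Finset.sum_insertNone] at hmem

theorem convexHull_antiexchange {s : Set E} {a p : E} (ha : a ∉ convexHull 𝕜 s)
    (hp : p ∈ convexHull 𝕜 (insert a s)) (hap : a ∈ convexHull 𝕜 (insert p s)) : p = a := by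
  obtain rfl | hs := s.eq_empty_or_nonempty
  · simpa using hp
  simp only [convexHull_insert hs, convexJoin_singleton_left, Set.mem_iUnion₂] at hp hap
  obtain ⟨y, hy, α, β, hα, hβ, hαβ, rfl⟩ := hp
  obtain ⟨z, hz, γ, δ, hγ, hδ, hγδ, haz⟩ := hap
  obtain rfl | hβ0 := hβ.eq_or_lt
  · simp [show α = 1 by simpa using hαβ]
  have hsum : γ * β + δ = 1 - γ * α := by linear_combination hγδ + γ * hαβ
  have hpos : 0 < 1 - γ * α := by nlinarith
  have hcomb : (1 - γ * α)⁻¹ • ((γ * β) • y + δ • z) = a := by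
    rw [inv_smul_eq_iff₀ hpos.ne']
    linear_combination (norm := module) haz
  refine absurd ?_ ha
  rw [← hcomb, smul_add, smul_smul, smul_smul]
  refine convex_convexHull 𝕜 s hy hz (by positivity) (by positivity) ?_
  rw [← mul_add, hsum, inv_mul_cancel₀ hpos.ne']

theorem exists_two_smul_sub_mem_convexHull_or {t : Finset E} {x : E}
    (hx : x ∈ convexHull 𝕜 (t : Set E)) (ht : t.card ≤ 3) :
    (∃ a ∈ t, (2 : 𝕜) • x - a ∈ convexHull 𝕜 (t : Set E)) ∨
      t.card = 3 ∧ ∑ i ∈ t, i - (2 : 𝕜) • x ∈ convexHull 𝕜 (t : Set E) := by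
  classical
  have hne : t.Nonempty := Finset.coe_nonempty.1 (convexHull_nonempty_iff.1 ⟨x, hx⟩)
  obtain ⟨w, hw, hw_sum, rfl⟩ := Finset.mem_convexHull'.1 hx
  by_cases hbig : ∃ a ∈ t, 1 ≤ 2 * w a
  · obtain ⟨a, ha, hwa⟩ := hbig
    refine .inl ⟨a, ha, Finset.mem_convexHull'.2
      ⟨fun i ↦ 2 * w i - if i = a then 1 else 0, fun i hi ↦ ?_, ?_, ?_⟩⟩
    · obtain rfl | hia := eq_or_ne i a
      · simpa using hwa
      · simpa [hia] using hw i hi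
    · simp only [Finset.sum_sub_distrib, ← Finset.mul_sum, hw_sum, Finset.sum_ite_eq', if_pos ha]
      norm_num
    · simp only [sub_smul, Finset.sum_sub_distrib, mul_smul, ← Finset.smul_sum, ite_smul,
        one_smul, zero_smul, Finset.sum_ite_eq', if_pos ha]
  · push Not at hbig
    have hlt : (2 : 𝕜) < t.card := by
      simpa [← Finset.mul_sum, hw_sum] using Finset.sum_lt_sum_of_nonempty hne hbig
    have hcard : t.card = 3 := ht.antisymm (by exact_mod_cast hlt)
    refine .inr ⟨hcard, Finset.mem_convexHull'.2
      ⟨fun i ↦ 1 - 2 * w i, fun i hi ↦ sub_nonneg.2 (hbig i hi).le, ?_, ?_⟩⟩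
    · simp only [Finset.sum_sub_distrib, ← Finset.mul_sum, hw_sum, Finset.sum_const, hcard]
      norm_num
    · simp only [sub_smul, one_smul, Finset.sum_sub_distrib, mul_smul, ← Finset.smul_sum]

variable [DecidableEq E]

theorem exists_mem_convexHull_insert_erase {t : Finset E} {x p : E}
    (hx : x ∈ convexHull 𝕜 (t : Set E)) (hp : p ∈ convexHull 𝕜 (t : Set E)) :
    ∃ a ∈ t, x ∈ convexHull 𝕜 (insert p (t.erase a) : Set E) := by
  obtain ⟨w, hw, hw_sum, rfl⟩ := Finset.mem_convexHull'.1 hx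
  obtain ⟨v, hv, hv_sum, rfl⟩ := Finset.mem_convexHull'.1 hp
  have hne : {i ∈ t | 0 < v i}.Nonempty := by
    obtain ⟨i, hi, hvi⟩ := Finset.exists_lt_of_sum_lt
      (show ∑ _i ∈ t, (0 : 𝕜) < ∑ i ∈ t, v i by simp [hv_sum])
    exact ⟨i, Finset.mem_filter.2 ⟨hi, hvi⟩⟩
  obtain ⟨a, ha, hmin⟩ := Finset.exists_min_image _ (fun i ↦ w i / v i) hne
  obtain ⟨hat, hva⟩ := Finset.mem_filter.1 ha
  -- `r` is the largest multiple of `p` that can be split off `x` leaving nonnegative weights;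
  -- the weight of `a` then vanishes.
  set r := w a / v a
  set p := ∑ i ∈ t, v i • i
  have hra : w a - r * v a = 0 := by simp [r, hva.ne']
  have hnonneg : ∀ i ∈ t, 0 ≤ w i - r * v i := fun i hi ↦ by
    obtain hvi | hvi := (hv i hi).eq_or_lt
    · simpa [← hvi] using hw i hi
    · exact sub_nonneg.2 ((le_div_iff₀ hvi).1 (hmin i (Finset.mem_filter.2 ⟨hi, hvi⟩)))
  have hsum : r + ∑ i ∈ t.erase a, (w i - r * v i) = 1 := by
    rw [Finset.sum_erase (f := fun i ↦ w i - r * v i) _ hra, Finset.sum_sub_distrib,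
      ← Finset.mul_sum, hw_sum, hv_sum, mul_one, add_sub_cancel]
  have hcomb : r • p + ∑ i ∈ t.erase a, (w i - r * v i) • i = ∑ i ∈ t, w i • i := by
    rw [Finset.sum_erase _ (by rw [hra, zero_smul])]
    simp only [sub_smul, mul_smul, Finset.sum_sub_distrib, ← Finset.smul_sum, p, add_sub_cancel]
  refine ⟨a, hat, hcomb ▸ smul_add_sum_smul_mem_of_convex (convex_convexHull 𝕜 _)
    (div_nonneg (hw a hat) hva.le) (fun i hi ↦ hnonneg i (Finset.mem_of_mem_erase hi)) hsum
    (subset_convexHull 𝕜 _ (Set.mem_insert _ _))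
    fun i hi ↦ subset_convexHull 𝕜 _ (Set.mem_insert_of_mem _ hi)⟩

end ConvexHull

section LatticeHull

variable {𝕜 E : Type*} [Field 𝕜] [LinearOrder 𝕜] [AddCommGroup E] [Module 𝕜 E]
  {L : AddSubgroup E} {s t : Set E}

variable (𝕜 L s) in
/-- The points of the additive subgroup `L` in the convex hull of `s`. For `L` a lattice and `s` a
finite subset of `L`, these are the lattice points of a lattice polytope. -/
def latticeHull : Set E :=
  L ∩ convexHull 𝕜 s

theorem subset_latticeHull (hs : s ⊆ L) : s ⊆ latticeHull 𝕜 L s :=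
  Set.subset_inter hs (subset_convexHull 𝕜 s)

theorem latticeHull_mono (hst : s ⊆ t) : latticeHull 𝕜 L s ⊆ latticeHull 𝕜 L t :=
  Set.inter_subset_inter_right _ (convexHull_mono hst)

theorem latticeHull_subset_latticeHull (hst : s ⊆ latticeHull 𝕜 L t) :
    latticeHull 𝕜 L s ⊆ latticeHull 𝕜 L t :=
  Set.inter_subset_inter_right _
    (convexHull_min (hst.trans Set.inter_subset_right) (convex_convexHull 𝕜 t))

theorem two_smul_mem_latticeHull_add_or_exists_not_subset [IsStrictOrderedRing 𝕜]
    {t : Finset E} {x : E} (htL : (t : Set E) ⊆ L) (ht : AffineIndependent 𝕜 ((↑) : t → E))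
    (htc : t.card ≤ 3) (hx : x ∈ convexHull 𝕜 (t : Set E)) (hxL : (2 : 𝕜) • x ∈ L) :
    (2 : 𝕜) • x ∈ latticeHull 𝕜 L t + latticeHull 𝕜 L t ∨
      ∃ u : Finset E, (u : Set E) ⊆ latticeHull 𝕜 L t ∧ x ∈ convexHull 𝕜 (u : Set E) ∧
        ¬ (t : Set E) ⊆ convexHull 𝕜 u := by
  classical
  have hmem : (t : Set E) ⊆ latticeHull 𝕜 L t := subset_latticeHull htL
  obtain ⟨a, ha, hxa⟩ | ⟨hcard, hp⟩ := exists_two_smul_sub_mem_convexHull_or hx htc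
  · exact .inl ⟨a, hmem ha, _, ⟨L.sub_mem hxL (htL ha), hxa⟩, add_sub_cancel _ _⟩
  set p := ∑ i ∈ t, i - (2 : 𝕜) • x with hp_def
  obtain ⟨a, ha, hxa⟩ := exists_mem_convexHull_insert_erase hx hp
  obtain hpa | hpa := eq_or_ne p a
  · left
    have hsum : ∑ i ∈ t.erase a, i = (2 : 𝕜) • x := by
      rw [Finset.sum_erase_eq_sub ha, ← hpa, hp_def, sub_sub_cancel]
    obtain ⟨y, z, hyz, hte⟩ := Finset.card_eq_two.1
      (show (t.erase a).card = 2 by rw [Finset.card_erase_of_mem ha, hcard])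
    have hyzt : {y, z} ⊆ t := hte ▸ t.erase_subset a
    rw [← hsum, hte, Finset.sum_pair hyz]
    exact Set.add_mem_add (hmem (hyzt (by simp))) (hmem (hyzt (by simp)))
  · refine .inr ⟨insert p (t.erase a), ?_, by rwa [Finset.coe_insert], fun hsub ↦ hpa ?_⟩
    · rw [Finset.coe_insert, Set.insert_subset_iff]
      have hpL : p ∈ L := L.sub_mem (L.sum_mem fun i hi ↦ htL hi) hxL
      exact ⟨⟨hpL, hp⟩, fun i hi ↦ hmem (Finset.mem_of_mem_erase hi)⟩
    · refine convexHull_antiexchange (notMem_convexHull_erase_of_affineIndependent ht ha) ?_ ?_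
      · rwa [← Finset.coe_insert, Finset.insert_erase ha]
      · simpa only [Finset.coe_insert] using hsub ha

end LatticeHull

section PlanarLattice

variable {E : Type*} [NormedAddCommGroup E] [NormedSpace ℝ E] [FiniteDimensional ℝ E]
  {L : AddSubgroup E} [DiscreteTopology L]

theorem finite_latticeHull {s : Set E} (hs : Bornology.IsBounded s) :
    (latticeHull ℝ L s).Finite := by
  have := FiniteDimensional.proper_real E
  rw [latticeHull, Set.inter_comm]
  exact Metric.finite_isBounded_inter_isClosed DiscreteTopology.isDiscrete
    (isBounded_convexHull.2 hs) AddSubgroup.isClosed_of_discrete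

theorem two_smul_mem_latticeHull_add {s : Finset E} {x : E} (hE : Module.finrank ℝ E ≤ 2)
    (hsL : (s : Set E) ⊆ L) (hx : x ∈ convexHull ℝ (s : Set E)) (hxL : (2 : ℝ) • x ∈ L) :
    (2 : ℝ) • x ∈ latticeHull ℝ L s + latticeHull ℝ L s := by
  induction hn : (latticeHull ℝ L s).ncard using Nat.strong_induction_on generalizing s with
  | _ n ih =>
  simp only [convexHull_eq_union (s := (s : Set E)), Set.mem_iUnion] at hx
  obtain ⟨t, hts, ht, hxt⟩ := hx
  have hcard : t.card ≤ 3 := by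
    have h := ht.card_le_finrank_succ.trans (Nat.succ_le_succ (Submodule.finrank_le _))
    rw [Fintype.card_coe] at h
    lia
  have hts_hull : latticeHull ℝ L t ⊆ latticeHull ℝ L s := latticeHull_mono hts
  obtain h | ⟨u, hu, hxu, htu⟩ :=
    two_smul_mem_latticeHull_add_or_exists_not_subset (hts.trans hsL) ht hcard hxt hxL
  · exact Set.add_subset_add hts_hull hts_hull h
  have hus : latticeHull ℝ L u ⊂ latticeHull ℝ L s :=
    ⟨latticeHull_subset_latticeHull (hu.trans hts_hull),
      fun h ↦ htu fun i hi ↦ (h (subset_latticeHull hsL (hts hi))).2⟩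
  have hlt : (latticeHull ℝ L u).ncard < n :=
    hn ▸ Set.ncard_lt_ncard hus (finite_latticeHull s.finite_toSet.isBounded)
  exact Set.add_subset_add hus.subset hus.subset
    (ih _ hlt (hu.trans Set.inter_subset_left) hxu rfl)

theorem latticeHull_add_self {s : Set E} (hE : Module.finrank ℝ E ≤ 2) (hs : s ⊆ L) :
    latticeHull ℝ L (s + s) = latticeHull ℝ L s + latticeHull ℝ L s := by
  refine Set.Subset.antisymm ?_ ?_
  · have htwo : convexHull ℝ (s + s) = (2 : ℝ) • convexHull ℝ s := by
      rw [convexHull_add, ← one_add_one_eq_two,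
        (convex_convexHull ℝ s).add_smul zero_le_one zero_le_one, one_smul]
    rintro z ⟨hzL, hz⟩
    obtain ⟨x, hx, rfl⟩ := htwo ▸ hz
    simp only [convexHull_eq_union (s := s), Set.mem_iUnion] at hx
    obtain ⟨t, hts, -, hxt⟩ := hx
    exact Set.add_subset_add (latticeHull_mono hts) (latticeHull_mono hts)
      (two_smul_mem_latticeHull_add hE (hts.trans hs) hxt hzL)
  · rintro _ ⟨y, ⟨hyL, hy⟩, z, ⟨hzL, hz⟩, rfl⟩
    exact ⟨L.add_mem hyL hzL, (convexHull_add (R := ℝ) s s).ge (Set.add_mem_add hy hz)⟩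

end PlanarLattice

section ValidDiff

instance discreteTopology_range_toComplex :
    DiscreteTopology (toComplex : GaussianInt →+ ℂ).range := by
  refine DiscreteTopology.of_forall_le_norm one_pos ?_
  rintro ⟨_, w, rfl⟩ hw
  have hw0 : w ≠ 0 := by rintro rfl; simp at hw
  have h1 : (1 : ℝ) ≤ w.norm := by exact_mod_cast GaussianInt.norm_pos.2 hw0
  rw [intCast_real_norm, Complex.normSq_eq_norm_sq] at h1
  exact (one_le_sq_iff₀ (_root_.norm_nonneg _)).1 h1

theorem convex_setOf_two_mul_abs_lt {E : Type*} [AddCommGroup E] [Module ℝ E] (f : E →ₗ[ℝ] ℝ)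
    (c : ℝ) : Convex ℝ {z | 2 * |f z| < c} := by
  have hball : {z | 2 * |f z| < c} = f ⁻¹' Metric.ball 0 (c / 2) := by
    ext z
    simp [lt_div_iff₀', Real.norm_eq_abs]
  exact hball ▸ (convex_ball 0 (c / 2)).linear_preimage f

open scoped ComplexConjugate

/-- The open square in `ℂ` centred at `0` with sides of length `|q|` parallel to `q` and `i * q`;
the valid symbols are its Gaussian integer points. -/
def symbolSquare (q : ℂ) : Set ℂ :=
  {z | 2 * |(z * conj q).re| < Complex.normSq q} ∩ {z | 2 * |(z * conj q).im| < Complex.normSq q}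

theorem convex_symbolSquare (q : ℂ) : Convex ℝ (symbolSquare q) :=
  (convex_setOf_two_mul_abs_lt (Complex.reLm ∘ₗ LinearMap.mulRight ℝ (conj q)) _).inter
    (convex_setOf_two_mul_abs_lt (Complex.imLm ∘ₗ LinearMap.mulRight ℝ (conj q)) _)

theorem isValidSymbol_iff_toComplex_mem_symbolSquare {q w : GaussianInt} :
    IsValidSymbol q w ↔ toComplex w ∈ symbolSquare (toComplex q) := by
  simp only [IsValidSymbol, symbolSquare, Set.mem_inter_iff, Set.mem_ofPred_eq, ← toComplex_star,
    ← toComplex_mul, ← intCast_re, ← intCast_im, ← intCast_real_norm]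
  norm_cast

theorem isValidSymbol_neg_iff {q w : GaussianInt} : IsValidSymbol q (-w) ↔ IsValidSymbol q w := by
  simp only [IsValidSymbol, neg_mul, Zsqrtd.re_neg, Zsqrtd.im_neg, abs_neg]

theorem isValidDiff_iff_exists_add {q δ : GaussianInt} :
    IsValidDiff q δ ↔ ∃ w w', IsValidSymbol q w ∧ IsValidSymbol q w' ∧ w + w' = δ := by
  constructor
  · rintro ⟨w, w', hw, hw', rfl⟩
    exact ⟨w, -w', hw, isValidSymbol_neg_iff.2 hw', (sub_eq_add_neg w w').symm⟩
  · rintro ⟨w, w', hw, hw', rfl⟩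
    exact ⟨w, -w', hw, isValidSymbol_neg_iff.2 hw', (sub_neg_eq_add w w').symm⟩

theorem isValidSymbol_of_toComplex_mem_convexHull {q w : GaussianInt}
    (hw : toComplex w ∈ convexHull ℝ (toComplex '' {x | IsValidSymbol q x})) :
    IsValidSymbol q w :=
  isValidSymbol_iff_toComplex_mem_symbolSquare.2 <| convexHull_min
    (Set.image_subset_iff.2 fun _ ↦ isValidSymbol_iff_toComplex_mem_symbolSquare.1)
    (convex_symbolSquare _) hw

theorem image_isValidDiff (q : GaussianInt) :
    toComplex '' {x | IsValidDiff q x} =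
      toComplex '' {x | IsValidSymbol q x} + toComplex '' {x | IsValidSymbol q x} := by
  rw [← Set.image_add]
  congr 1
  ext δ
  simp [isValidDiff_iff_exists_add, Set.mem_add]

theorem stmt14_general (q δ : GaussianInt)
    (hδ : toComplex δ ∈ convexHull ℝ (toComplex '' {x : GaussianInt | IsValidDiff q x})) :
    IsValidDiff q δ := by
  rw [image_isValidDiff] at hδ
  have hmem : toComplex δ ∈ latticeHull ℝ (toComplex : GaussianInt →+ ℂ).range
      (toComplex '' {x | IsValidSymbol q x} + toComplex '' {x | IsValidSymbol q x}) :=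
    ⟨⟨δ, rfl⟩, hδ⟩
  rw [latticeHull_add_self Complex.finrank_real_complex.le (Set.image_subset_range _ _)] at hmem
  obtain ⟨_, ⟨⟨w, rfl⟩, hw⟩, _, ⟨⟨w', rfl⟩, hw'⟩, hsum⟩ := hmem
  exact isValidDiff_iff_exists_add.2 ⟨w, w', isValidSymbol_of_toComplex_mem_convexHull hw,
    isValidSymbol_of_toComplex_mem_convexHull hw', toComplex_injective ((map_add _ _ _).trans hsum)⟩

end ValidDiff

/-- Let `q` be a Gaussian prime with `N(q) ≥ 5`, and regard the set `Λ_q` of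
valid differences as a subset of `ℂ`. Every Gaussian integer whose complex embedding lies in
the convex hull of `Λ_q` (in `ℂ` as a real vector space) is itself a valid difference. -/
theorem stmt14 (q : GaussianInt) (hq : Prime q) (hq5 : 5 ≤ q.norm)
    (δ : GaussianInt)
    (hδ : toComplex δ ∈ convexHull ℝ (toComplex '' {x : GaussianInt | IsValidDiff q x})) :
    IsValidDiff q δ :=
  stmt14_general q δ hδ
end

section
/- Let κ, τ, γ, δ be Gaussian integers with gcd(κ, τ) a unit and gcd(γ, δ) a unit. (i) If 2 divides κ·δ − τ·γ in ℤ[i], then there exists a unit ϑ ∈ {1, −1, i, −i} such that 2 ∣ κ + ϑ·γ and 2 ∣ τ + ϑ·δ. (ii) If 3 divides κ·δ − τ·γ in ℤ[i], then there exists a Gaussian integer ϑ with 1 ≤ N(ϑ) ≤ 2 such that 3 ∣ κ + ϑ·γ and 3 ∣ τ + ϑ·δ. -/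
open GaussianInt

/-!
Modulo `m`, two unimodular rows `(a, b)` and `(c, d)` with vanishing determinant are proportional,
and the ratio is a unit. Over `ℤ[i]` with `m = n` a positive integer, reducing real and imaginary
parts to their balanced residues represents this ratio by some `ϑ` with `N(ϑ) ≤ 2 ⌊n / 2⌋²`.
Being a unit modulo `n`, this `ϑ` has norm prime to `n`. For `n = 2` and `n = 3` the bound is
`N(ϑ) ≤ 2`, so `N(ϑ)` is `1` in the first case, and `1` or `2` in the second.
-/

theorem exists_isCoprime_dvd_add_mul {R : Type*} [CommRing R] {m a b c d : R}
    (hab : IsCoprime a b) (hcd : IsCoprime c d) (h : m ∣ a * d - b * c) :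
    ∃ u : R, IsCoprime u m ∧ m ∣ a + u * c ∧ m ∣ b + u * d := by
  obtain ⟨x, y, hxy⟩ := hab
  obtain ⟨p, q, hpq⟩ := hcd
  obtain ⟨k, hk⟩ := h
  -- Modulo `m`, the inverse of `u` is `-(x * c + y * d)`.
  refine ⟨-(p * a + q * b), ⟨-(x * c + y * d), (x * q - y * p) * k, ?_⟩, ⟨q * k, ?_⟩, ⟨-p * k, ?_⟩⟩
  · linear_combination (y * p - x * q) * hk + hxy + (x * a + y * b) * hpq
  · linear_combination q * hk - a * hpq
  · linear_combination -p * hk - b * hpq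

theorem bmod_sq_le_half_sq {n : ℕ} (hn : 0 < n) (x : ℤ) : x.bmod n ^ 2 ≤ (n / 2 : ℤ) ^ 2 := by
  have lower : -(n / 2 : ℤ) ≤ x.bmod n := Int.le_bmod hn
  have upper : x.bmod n ≤ (n - 1 : ℤ) / 2 := Int.bmod_le hn
  exact sq_le_sq' lower (by lia)

theorem exists_norm_le_natCast_dvd_sub {n : ℕ} (hn : 0 < n) (z : GaussianInt) :
    ∃ r : GaussianInt, r.norm ≤ 2 * (n / 2 : ℤ) ^ 2 ∧ (n : GaussianInt) ∣ r - z := by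
  refine ⟨⟨z.re.bmod n, z.im.bmod n⟩, ?_, ?_⟩
  · rw [Zsqrtd.norm_def]
    linarith [bmod_sq_le_half_sq hn z.re, bmod_sq_le_half_sq hn z.im]
  · exact_mod_cast (Zsqrtd.intCast_dvd n _).2 ⟨Int.dvd_bmod_sub_self, Int.dvd_bmod_sub_self⟩

theorem isCoprime_of_isCoprime_intCast {d k n : ℤ} (h : IsCoprime (k : ℤ√d) n) :
    IsCoprime k n := by
  obtain ⟨a, b, hab⟩ := h
  exact ⟨a.re, b.re, by simpa using congrArg Zsqrtd.re hab⟩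

theorem isCoprime_norm_of_isCoprime_intCast {d n : ℤ} {z : ℤ√d} (h : IsCoprime z n) :
    IsCoprime z.norm n := by
  have hstar : IsCoprime (star z) (n : ℤ√d) := by
    simpa [starRingEnd_apply] using h.map (starRingEnd (ℤ√d))
  apply isCoprime_of_isCoprime_intCast (d := d)
  rw [Zsqrtd.norm_eq_mul_conj]
  exact h.mul_left hstar

theorem exists_isCoprime_norm_natCast_dvd_add_mul {n : ℕ} (hn : 0 < n) {κ τ γ δ : GaussianInt}
    (hκτ : IsCoprime κ τ) (hγδ : IsCoprime γ δ) (h : (n : GaussianInt) ∣ κ * δ - τ * γ) :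
    ∃ ϑ : GaussianInt, IsCoprime ϑ.norm n ∧ ϑ.norm ≤ 2 * (n / 2 : ℤ) ^ 2 ∧
      (n : GaussianInt) ∣ κ + ϑ * γ ∧ (n : GaussianInt) ∣ τ + ϑ * δ := by
  obtain ⟨u, hu, hκ, hτ⟩ := exists_isCoprime_dvd_add_mul hκτ hγδ h
  obtain ⟨ϑ, hϑ, k, hk⟩ := exists_norm_le_natCast_dvd_sub hn u
  obtain rfl : ϑ = u + n * k := eq_add_of_sub_eq' hk
  have dvd_of_dvd {x y : GaussianInt} (hxy : (n : GaussianInt) ∣ x + u * y) :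
      (n : GaussianInt) ∣ x + (u + n * k) * y := by
    rw [add_mul, ← add_assoc, mul_assoc]
    exact dvd_add hxy (dvd_mul_right _ _)
  have hcop : IsCoprime (u + n * k) ((n : ℤ) : GaussianInt) := by
    exact_mod_cast hu.add_mul_left_left k
  exact ⟨_, isCoprime_norm_of_isCoprime_intCast hcop, hϑ, dvd_of_dvd hκ, dvd_of_dvd hτ⟩

theorem mem_one_neg_one_i_neg_i_of_norm_eq_one {z : GaussianInt} (hz : z.norm = 1) :
    z ∈ ({1, -1, ⟨0, 1⟩, ⟨0, -1⟩} : Set GaussianInt) := by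
  obtain ⟨x, y⟩ := z
  replace hz : x * x + y * y = 1 := by simpa [Zsqrtd.norm_def] using hz
  have hx : |x| ≤ 1 := by rw [← sq_le_one_iff_abs_le_one]; nlinarith
  have hy : |y| ≤ 1 := by rw [← sq_le_one_iff_abs_le_one]; nlinarith
  rw [abs_le] at hx hy
  obtain ⟨hx₀, hx₁⟩ := hx
  obtain ⟨hy₀, hy₁⟩ := hy
  interval_cases x <;> interval_cases y <;> simp_all [Zsqrtd.ext_iff]

/-- Let `κ, τ, γ, δ` be Gaussian integers with `gcd(κ, τ)` a unit and
`gcd(γ, δ)` a unit. (i) If `2 ∣ κ·δ − τ·γ` in `ℤ[i]`, then there exists a unit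
`ϑ ∈ {1, −1, i, −i}` with `2 ∣ κ + ϑ·γ` and `2 ∣ τ + ϑ·δ`. (ii) If `3 ∣ κ·δ − τ·γ` in `ℤ[i]`,
then there exists a Gaussian integer `ϑ` with `1 ≤ N(ϑ) ≤ 2` such that `3 ∣ κ + ϑ·γ` and
`3 ∣ τ + ϑ·δ`. -/
theorem stmt15 (κ τ γ δ : GaussianInt)
    (h1 : IsUnit (EuclideanDomain.gcd κ τ)) (h2 : IsUnit (EuclideanDomain.gcd γ δ)) :
    ((2 : GaussianInt) ∣ κ * δ - τ * γ →
      ∃ ϑ : GaussianInt, ϑ ∈ ({1, -1, ⟨0, 1⟩, ⟨0, -1⟩} : Set GaussianInt) ∧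
        (2 : GaussianInt) ∣ κ + ϑ * γ ∧ (2 : GaussianInt) ∣ τ + ϑ * δ) ∧
    ((3 : GaussianInt) ∣ κ * δ - τ * γ →
      ∃ ϑ : GaussianInt, 1 ≤ ϑ.norm ∧ ϑ.norm ≤ 2 ∧
        (3 : GaussianInt) ∣ κ + ϑ * γ ∧ (3 : GaussianInt) ∣ τ + ϑ * δ) := by
  rw [EuclideanDomain.gcd_isUnit_iff] at h1 h2
  refine ⟨fun h ↦ ?_, fun h ↦ ?_⟩
  · obtain ⟨ϑ, hcop, hle, hκ, hτ⟩ :=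
      exists_isCoprime_norm_natCast_dvd_add_mul (n := 2) two_pos h1 h2 h
    obtain ⟨j, hodd⟩ : Odd ϑ.norm := Int.isCoprime_two_right.1 hcop
    have hnonneg : 0 ≤ ϑ.norm := GaussianInt.norm_nonneg ϑ
    have hone : ϑ.norm = 1 := by lia
    exact ⟨ϑ, mem_one_neg_one_i_neg_i_of_norm_eq_one hone, hκ, hτ⟩
  · obtain ⟨ϑ, hcop, hle, hκ, hτ⟩ :=
      exists_isCoprime_norm_natCast_dvd_add_mul (n := 3) three_pos h1 h2 h
    have hne : ϑ.norm ≠ 0 := fun h0 ↦ by norm_num [h0, Int.isUnit_iff] at hcop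
    have hpos : 0 < ϑ.norm := (GaussianInt.norm_nonneg ϑ).lt_of_ne' hne
    exact ⟨ϑ, hpos, by simpa using hle, hκ, hτ⟩
end
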